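/- Let (R,m) be a Noetherian complete local domain of prime characteristic p > 0 and of Krull dimension d, and let I = (g_1,…,g_n) be an ideal of R. Then: (i) the robust closure of I equals the tight closure I^* (indeed already the immediate robust closure I^▫ equals I^*); (ii) for every u ∈ R, if the image in the generic forcing algebra S = R[Z_1,…,Z_n]/(u − Σ_{l=1}^n Z_l g_l) of one system of parameters of R forms a Q-sequence in S, then the image of every system of parameters of R forms a Q-sequence in S. -/

import Mathlib

set_option synthInstance.maxHeartbeats 1000000
set_option maxHeartbeats 1000000
open scoped BigOperators ENNReal TensorProduct

universe u

/-- A filtration of `M` of length `h` whose factors are cyclic modules killed by `J`. -/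
def HasQLFiltration (S : Type u) [CommRing S] (J : Ideal S)
    (M : Type u) [AddCommGroup M] [Module S M] (h : ℕ) : Prop :=
  ∃ c : Fin (h + 1) → Submodule S M,
    Monotone c ∧ c 0 = ⊥ ∧ c (Fin.last h) = ⊤ ∧
    ∀ i : Fin h,
      (∃ m : M, c i.succ = c i.castSucc ⊔ Submodule.span S {m}) ∧
      ∀ a ∈ J, ∀ x ∈ c i.succ, a • x ∈ c i.castSucc

/-- The `J`-quasilength of `M`. -/
noncomputable def quasilength (S : Type u) [CommRing S] (J : Ideal S)
    (M : Type u) [AddCommGroup M] [Module S M] : ℕ∞ :=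
  sInf {n : ℕ∞ | ∃ h : ℕ, n = (h : ℕ∞) ∧ HasQLFiltration S J M h}

/-- `x₁, …, x_d` is a Q-sequence in `S`. -/
def IsQSequence {d : ℕ} {S : Type u} [CommRing S] (x : Fin d → S) : Prop :=
  Ideal.span (Set.range x) ≠ ⊤ ∧
  ∀ t : ℕ, 0 < t →
    ((t : ℕ∞) ^ d) ≤ quasilength S (Ideal.span (Set.range x))
      (S ⧸ Ideal.span (Set.range fun i => x i ^ t))

/-- `T` is a robust algebra over the (complete local domain) `D`: the image in `T`
of every system of parameters of `D` is a Q-sequence in `T`. -/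
def IsRobustOver (D : Type u) [CommRing D] (T : Type u) [CommRing T] [Algebra D T] : Prop :=
  ∀ (d : ℕ) (x : Fin d → D), ringKrullDim D = d →
    (Ideal.span (Set.range x)).radical.IsMaximal →
    IsQSequence (fun i => algebraMap D T (x i))

/-- `D` is a complete local domain of `R`, i.e. `D ≅ (R_m)^∧ / q` (compatibly with the
structure maps) for some maximal ideal `m` of `R` and minimal prime `q` of `(R_m)^∧`. -/
def IsCompleteLocalDomainOf (R : Type u) [CommRing R] (D : Type u) [CommRing D]
    [Algebra R D] : Prop :=
  ∃ (m : Ideal R) (hm : m.IsMaximal),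
    haveI : m.IsPrime := hm.isPrime
    ∃ q ∈ minimalPrimes (AdicCompletion (IsLocalRing.maximalIdeal (Localization.AtPrime m))
        (Localization.AtPrime m)),
      ∃ e : D ≃+* (AdicCompletion (IsLocalRing.maximalIdeal (Localization.AtPrime m))
          (Localization.AtPrime m) ⧸ q),
        ∀ r : R, e (algebraMap R D r) =
          Ideal.Quotient.mk q (algebraMap (Localization.AtPrime m)
            (AdicCompletion (IsLocalRing.maximalIdeal (Localization.AtPrime m))
              (Localization.AtPrime m)) (algebraMap R (Localization.AtPrime m) r))

/-- `T` is a robust `R`-algebra: `D ⊗_R T` is robust over `D` for every complete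
local domain `D` of `R`. -/
def IsRobustAlgebra (R : Type u) [CommRing R] (T : Type u) [CommRing T] [Algebra R T] : Prop :=
  ∀ (D : Type u) [CommRing D] [Algebra R D], IsCompleteLocalDomainOf R D →
    IsRobustOver D (D ⊗[R] T)

/-- `S` is a forcing algebra for `(M, N, u)`. -/
def IsForcingAlgebra (D : Type u) [CommRing D] (M : Type u) [AddCommGroup M] [Module D M]
    (N : Submodule D M) (u : M) (S : Type u) [CommRing S] [Algebra D S] : Prop :=
  (1 : S) ⊗ₜ[D] u ∈ N.baseChange S

/-- The immediate robust closure `N^▫` of `N` in `M` (over a complete local domain `D`):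
the submodule generated by `N` and all `u` admitting a robust forcing algebra. -/
noncomputable def immediateRobustClosure (D : Type u) [CommRing D] (M : Type u)
    [AddCommGroup M] [Module D M] (N : Submodule D M) : Submodule D M :=
  N ⊔ Submodule.span D {u : M |
    ∃ (S : Type u) (_ : CommRing S) (_ : Algebra D S),
      IsForcingAlgebra D M N u S ∧ IsRobustOver D S}

/-- The robust closure of `N` in `M` over a complete local domain `D`:
the (stabilizing) union of the iterated immediate robust closures `N^(j)`. -/
noncomputable def robustClosureCLD (D : Type u) [CommRing D] (M : Type u)
    [AddCommGroup M] [Module D M] (N : Submodule D M) : Submodule D M :=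
  ⨆ j : ℕ, (immediateRobustClosure D M)^[j] N

/-- `u` lies in the robust closure of `N` in `M` over the Noetherian ring `R`:
for every complete local domain `D` of `R`, the image of `u` in `D ⊗_R M` lies in the
robust closure, computed over `D`, of the image of `D ⊗_R N`. -/
def MemRobustClosure (R : Type u) [CommRing R] (M : Type u) [AddCommGroup M] [Module R M]
    (N : Submodule R M) (u : M) : Prop :=
  ∀ (D : Type u) [CommRing D] [Algebra R D], IsCompleteLocalDomainOf R D →
    (1 : D) ⊗ₜ[R] u ∈ robustClosureCLD D (D ⊗[R] M) (N.baseChange D)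


/-- `u` lies in the tight closure of the ideal `J` in the ring `T` of
prime characteristic `p`. -/
def MemTightClosure (T : Type u) [CommRing T] (p : ℕ) (J : Ideal T) (u : T) : Prop :=
  ∃ c : T, (∀ P ∈ minimalPrimes T, c ∉ P) ∧
    ∀ e : ℕ, c * u ^ p ^ e ∈ Ideal.span ((fun a => a ^ p ^ e) '' (J : Set T))

namespace RobustAux

/-- length of `R ⧸ I` -/
noncomputable def len {R : Type u} [CommRing R] (I : Ideal R) : ℕ∞ := Module.length R (R ⧸ I)

/-- the colon ideal `I : y` -/
def col {R : Type u} [CommRing R] (I : Ideal R) (y : R) : Ideal R :=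
  Submodule.comap (LinearMap.mulLeft R y) I

lemma mem_col {R : Type u} [CommRing R] {I : Ideal R} {y r : R} : r ∈ col I y ↔ y * r ∈ I := Iff.rfl

lemma le_col {R : Type u} [CommRing R] (I : Ideal R) (y : R) : I ≤ col I y := fun _ hr =>
  I.mul_mem_left y hr

lemma len_anti {R : Type u} [CommRing R] {I J : Ideal R} (h : I ≤ J) : len J ≤ len I :=
  Module.length_le_of_surjective (Submodule.factor h) (Submodule.factor_surjective h)

lemma len_top {R : Type u} [CommRing R] : len (⊤ : Ideal R) = 0 := by
  unfold len
  exact Module.length_eq_zero_iff.2 (Submodule.Quotient.subsingleton_iff.2 rfl)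

lemma len_pos {R : Type u} [CommRing R] {I : Ideal R} (h : I ≠ ⊤) : 1 ≤ len I := by
  unfold len
  have : Nontrivial (R ⧸ I) := Ideal.Quotient.nontrivial_iff.2 h
  exact Order.one_le_iff_pos.2 Module.length_pos

lemma len_split {R : Type u} [CommRing R] (I : Ideal R) (y : R) :
    len I = len (col I y) + len (I ⊔ Ideal.span {y}) := by
  unfold len
  have hle : col I y ≤ Submodule.comap (LinearMap.mulLeft R y) I := le_rfl
  refine Module.length_eq_add_of_exact
    (Submodule.mapQ (col I y) I (LinearMap.mulLeft R y) hle)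
    (Submodule.factor (le_sup_left : I ≤ I ⊔ Ideal.span {y})) ?_
    (Submodule.factor_surjective _) ?_
  · rw [← LinearMap.ker_eq_bot, LinearMap.ker_eq_bot']
    intro m hm
    obtain ⟨r, rfl⟩ := Submodule.Quotient.mk_surjective _ m
    rw [Submodule.mapQ_apply, Submodule.Quotient.mk_eq_zero] at hm
    exact (Submodule.Quotient.mk_eq_zero _).2 hm
  · intro m
    obtain ⟨r, rfl⟩ := Submodule.Quotient.mk_surjective _ m
    constructor
    · intro h
      have h' : r ∈ I ⊔ Ideal.span {y} := (Submodule.Quotient.mk_eq_zero _).1 h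
      obtain ⟨a, ha, b, hb, rfl⟩ := Submodule.mem_sup.1 h'
      obtain ⟨s, rfl⟩ := Ideal.mem_span_singleton'.1 hb
      refine ⟨Submodule.Quotient.mk s, ?_⟩
      rw [Submodule.mapQ_apply]
      refine (Submodule.Quotient.eq _).2 ?_
      have : LinearMap.mulLeft R y s - (a + s * y) = -a := by
        simp only [LinearMap.mulLeft_apply]; ring
      rw [this]; exact I.neg_mem ha
    · rintro ⟨s, hs⟩
      obtain ⟨s, rfl⟩ := Submodule.Quotient.mk_surjective _ s
      rw [← hs, Submodule.mapQ_apply]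
      refine (Submodule.Quotient.mk_eq_zero _).2 ?_
      exact Submodule.mem_sup_right (Ideal.mem_span_singleton.2 ⟨s, rfl⟩)

lemma len_pow_le {R : Type u} [CommRing R] (I : Ideal R) (y : R) (m : ℕ) :
    len (I ⊔ Ideal.span {y ^ m}) ≤ m * len (I ⊔ Ideal.span {y}) := by
  induction m with
  | zero =>
    have : I ⊔ Ideal.span {y ^ 0} = ⊤ := by simp
    rw [this, len_top]; exact zero_le
  | succ m ih =>
    rw [len_split _ (y ^ m)]
    push_cast
    rw [add_mul, one_mul, add_comm]
    refine add_le_add ((len_anti ?_).trans ih) (len_anti ?_)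
    · exact sup_le (le_sup_of_le_left le_sup_left) le_sup_right
    · refine sup_le (le_sup_left.trans (le_col _ _)) ?_
      rw [Ideal.span_singleton_le_iff_mem, mem_col, ← pow_succ]
      exact Submodule.mem_sup_right (Ideal.mem_span_singleton_self _)

lemma span_range_succ {R : Type u} [CommRing R] {d : ℕ} (x : Fin (d + 1) → R) :
    Ideal.span (Set.range x) = Ideal.span {x 0} ⊔ Ideal.span (Set.range (fun i : Fin d => x i.succ)) := by
  rw [← Ideal.span_union]
  congr 1
  ext z
  simp only [Set.mem_range, Set.mem_union, Set.mem_singleton_iff, Fin.exists_fin_succ]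
  constructor
  · rintro (h | h)
    · exact Or.inl h.symm
    · exact Or.inr h
  · rintro (h | h)
    · exact Or.inl h.symm
    · exact Or.inr h

/-- `x₁^t, …, x_d^t` -/
def pw {R : Type u} [CommRing R] {d : ℕ} (x : Fin d → R) (t : ℕ) : Ideal R :=
  Ideal.span (Set.range fun i => x i ^ t)

lemma pw_mem {R : Type u} [CommRing R] {d : ℕ} (x : Fin d → R) (t : ℕ) (i : Fin d) :
    x i ^ t ∈ pw x t := Ideal.subset_span ⟨i, rfl⟩

lemma pw_le {R : Type u} [CommRing R] {d : ℕ} {x : Fin d → R} {t : ℕ} {I : Ideal R}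
    (h : ∀ i, x i ^ t ∈ I) : pw x t ≤ I := by
  refine Ideal.span_le.2 ?_
  rintro _ ⟨i, rfl⟩
  exact h i

lemma pw_anti {R : Type u} [CommRing R] {d : ℕ} (x : Fin d → R) {s t : ℕ} (h : s ≤ t) :
    pw x t ≤ pw x s := pw_le fun i => (pw x s).pow_mem_of_pow_mem (pw_mem x s i) h

lemma len_pw_le {R : Type u} [CommRing R] {d : ℕ} (I : Ideal R) (x : Fin d → R) (m : ℕ) :
    len (I ⊔ pw x m) ≤ (m : ℕ∞) ^ d * len (I ⊔ Ideal.span (Set.range x)) := by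
  induction d generalizing I with
  | zero => simp [pw]
  | succ d ih =>
    unfold pw
    rw [span_range_succ, span_range_succ]
    have h1 := ih (I ⊔ Ideal.span {x 0 ^ m}) (fun i => x i.succ)
    have h2 := len_pow_le (I ⊔ Ideal.span (Set.range (fun i : Fin d => x i.succ))) (x 0) m
    unfold pw at h1
    rw [sup_assoc] at h1
    refine h1.trans ?_
    have e1 : I ⊔ Ideal.span {x 0 ^ m} ⊔ Ideal.span (Set.range (fun i : Fin d => x i.succ)) =
      I ⊔ Ideal.span (Set.range (fun i : Fin d => x i.succ)) ⊔ Ideal.span {x 0 ^ m} := by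
      rw [sup_right_comm]
    have e2 : I ⊔ (Ideal.span {x 0} ⊔ Ideal.span (Set.range (fun i : Fin d => x i.succ))) =
      I ⊔ Ideal.span (Set.range (fun i : Fin d => x i.succ)) ⊔ Ideal.span {x 0} := by
      rw [← sup_assoc, sup_right_comm]
    rw [e1, e2, pow_succ, mul_assoc]
    gcongr

lemma len_pw_mul_le {R : Type u} [CommRing R] {d : ℕ} (x : Fin d → R) (m n : ℕ) :
    len (pw x (n * m)) ≤ (m : ℕ∞) ^ d * len (pw x n) := by
  have := len_pw_le ⊥ (fun i => x i ^ n) m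
  simpa [pw, ← pow_mul] using this

/-- inductive version of quasilength filtrations -/
def QLI {S : Type u} [CommRing S] (J : Ideal S) : ℕ → Ideal S → Prop
  | 0, I => I = ⊤
  | h + 1, I => ∃ s, (∀ a ∈ J, a * s ∈ I) ∧ QLI J h (I ⊔ Ideal.span {s})

lemma QLI.mono {S : Type u} [CommRing S] {J : Ideal S} {h : ℕ} {I I' : Ideal S}
    (H : QLI J h I) (hI : I ≤ I') : QLI J h I' := by
  induction h generalizing I I' with
  | zero => exact top_unique (H ▸ hI)
  | succ h ih =>
    obtain ⟨s, hs, H⟩ := H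
    exact ⟨s, fun a ha => hI (hs a ha), ih H (sup_le_sup_right hI _)⟩

lemma QLI.split {S : Type u} [CommRing S] {J : Ideal S} {h₁ h₂ : ℕ} {I : Ideal S} {y : S}
    (H₁ : QLI J h₁ (col I y)) (H₂ : QLI J h₂ (I ⊔ Ideal.span {y})) : QLI J (h₁ + h₂) I := by
  induction h₁ generalizing I with
  | zero =>
    have h1 : (1 : S) ∈ col I y := by rw [show col I y = ⊤ from H₁]; trivial
    rw [mem_col, mul_one] at h1
    rw [zero_add]
    have : I ⊔ Ideal.span {y} = I := sup_eq_left.2 ((Ideal.span_singleton_le_iff_mem _).2 h1)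
    rwa [this] at H₂
  | succ h ih =>
    obtain ⟨s, hs, H⟩ := H₁
    rw [Nat.succ_add]
    refine ⟨y * s, fun a ha => ?_, ih (H.mono ?_) (H₂.mono ?_)⟩
    · have := hs a ha
      rw [mem_col] at this
      rwa [mul_left_comm]
    · refine sup_le ?_ ?_
      · intro r hr; rw [mem_col] at *; exact Submodule.mem_sup_left hr
      · rw [Ideal.span_singleton_le_iff_mem, mem_col]
        exact Submodule.mem_sup_right (Ideal.mem_span_singleton_self _)
    · exact sup_le_sup_right le_sup_left _

lemma QLI_chain {S : Type u} [CommRing S] {J : Ideal S} {h : ℕ} {I : Ideal S} (H : QLI J h I) :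
    ∃ U : ℕ → Ideal S, Monotone U ∧ U 0 = I ∧ U h = ⊤ ∧ ∀ i < h, ∃ s, U (i + 1) = U i ⊔ Ideal.span {s} ∧
      ∀ a ∈ J, a * s ∈ U i := by
  induction h generalizing I with
  | zero => exact ⟨fun _ => I, monotone_const, rfl, H, by simp⟩
  | succ h ih =>
    obtain ⟨s, hs, H⟩ := H
    obtain ⟨U, hm, h0, h1, h2⟩ := ih H
    refine ⟨fun n => Nat.casesOn n I U, monotone_nat_of_le_succ ?_, rfl, h1, ?_⟩
    · rintro (_ | n)
      · show I ≤ U 0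
        rw [h0]; exact le_sup_left
      · exact hm (Nat.le_succ n)
    · rintro (_ | i) hi
      · exact ⟨s, h0, hs⟩
      · exact h2 i (by omega)

lemma QLI.filtration {S : Type u} [CommRing S] {J : Ideal S} {h : ℕ} {I : Ideal S} (H : QLI J h I) :
    HasQLFiltration S J (S ⧸ I) h := by
  obtain ⟨U, hm, h0, h1, h2⟩ := QLI_chain H
  refine ⟨fun i => Submodule.map I.mkQ (U i), ?_, ?_, ?_, ?_⟩
  · intro i j hij
    exact Submodule.map_mono (hm hij)
  · simp only [Fin.val_zero, h0]
    exact Submodule.mkQ_map_self I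
  · simp only [Fin.val_last, h1, Submodule.map_top, Submodule.range_mkQ]
  · intro i
    obtain ⟨s, hs, hJ⟩ := h2 i i.2
    simp only [Fin.val_succ, Fin.val_castSucc, hs]
    refine ⟨⟨I.mkQ s, ?_⟩, ?_⟩
    · rw [Submodule.map_sup]
      congr 1
      exact (Submodule.map_span _ _).trans (by simp)
    · rintro a ha _ ⟨z, hz, rfl⟩
      refine ⟨a * z, ?_, rfl⟩
      obtain ⟨b, hb, c, hc, rfl⟩ := Submodule.mem_sup.1 hz
      obtain ⟨r, rfl⟩ := Ideal.mem_span_singleton'.1 hc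
      rw [mul_add, mul_left_comm]
      exact (U i).add_mem ((U i).mul_mem_left _ hb) ((U i).mul_mem_left _ (hJ a ha))

lemma QLI_of_filtration {S : Type u} [CommRing S] {J : Ideal S} {h : ℕ} {I : Ideal S}
    (H : HasQLFiltration S J (S ⧸ I) h) : QLI J h I := by
  obtain ⟨c, hm, h0, h1, h2⟩ := H
  have key : ∀ k (hk : k ≤ h), QLI J k (Submodule.comap I.mkQ (c ⟨h - k, by omega⟩)) := by
    intro k
    induction k with
    | zero =>
      intro _
      have : c ⟨h - 0, by omega⟩ = ⊤ := h1
      rw [this]; rfl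
    | succ k ih =>
      intro hk
      obtain ⟨⟨m, hm1⟩, hm2⟩ := h2 ⟨h - (k + 1), by omega⟩
      obtain ⟨s, rfl⟩ := Submodule.mkQ_surjective _ m
      have e : (⟨h - (k + 1), by omega⟩ : Fin h).succ = ⟨h - k, by omega⟩ := by
        ext; simp only [Fin.val_succ]; omega
      have e' : (⟨h - (k + 1), by omega⟩ : Fin h).castSucc = ⟨h - (k+1), by omega⟩ := rfl
      rw [e, e'] at hm1
      rw [e, e'] at hm2
      refine ⟨s, fun a ha => ?_, (ih (by omega)).mono ?_⟩
      · have := hm2 a ha (I.mkQ s) (by rw [hm1]; exact Submodule.mem_sup_right (Submodule.mem_span_singleton_self _))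
        exact this
      · intro z hz
        rw [Submodule.mem_comap, hm1] at hz
        obtain ⟨b, hb, w, hw, hbw⟩ := Submodule.mem_sup.1 hz
        obtain ⟨r, rfl⟩ := Submodule.mem_span_singleton.1 hw
        have : z = (z - r * s) + r * s := by ring
        rw [this]
        refine Submodule.add_mem_sup ?_ (Ideal.mem_span_singleton'.2 ⟨r, rfl⟩)
        rw [Submodule.mem_comap, map_sub, ← hbw]
        have : I.mkQ (r * s) = r • I.mkQ s := rfl
        rw [this, add_sub_cancel_right]
        exact hb
  have := key h le_rfl
  have e0 : (⟨h - h, by omega⟩ : Fin (h + 1)) = 0 := by ext; simp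
  rw [e0, h0] at this
  refine this.mono ?_
  rw [Submodule.comap_bot, Submodule.ker_mkQ]

lemma QLI_succ {S : Type u} [CommRing S] {J : Ideal S} {h : ℕ} {I : Ideal S} (H : QLI J h I) :
    QLI J (h + 1) I := ⟨0, by simp, H.mono le_sup_left⟩

lemma quasilength_ge {S : Type u} [CommRing S] {J I : Ideal S} {n : ℕ} :
    (n : ℕ∞) ≤ quasilength S J (S ⧸ I) ↔ ∀ h, QLI J h I → n ≤ h := by
  unfold quasilength
  rw [le_sInf_iff]
  constructor
  · intro H h hh
    exact_mod_cast H h ⟨h, rfl, hh.filtration⟩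
  · rintro H _ ⟨h, rfl, hh⟩
    exact_mod_cast H h (QLI_of_filtration hh)

lemma QLI_monomial {S : Type u} [CommRing S] {J : Ideal S} {t : ℕ} (ht : 0 < t) (d : ℕ) : ∀ (I : Ideal S)
    (x : Fin d → S), J ≤ I ⊔ Ideal.span (Set.range x) → (∀ i, x i ^ t ∈ I) →
    QLI J (t ^ d) I ∧ (∏ i, x i ^ (t - 1) ∈ I → QLI J (t ^ d - 1) I) := by
  induction d with
  | zero =>
    intro I x hJ hx
    have hJ' : J ≤ I := by simpa using hJ
    refine ⟨⟨1, fun a ha => by simpa using hJ' ha, by simp [QLI]⟩, fun h => ?_⟩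
    have : (1 : S) ∈ I := by simpa using h
    simpa [QLI] using (Ideal.eq_top_iff_one I).2 this
  | succ d ih =>
    intro I x hJ hx
    have hcol : ∀ m, J ≤ col (I ⊔ Ideal.span {x 0 ^ (m + 1)}) (x 0 ^ m) ⊔
        Ideal.span (Set.range (fun i : Fin d => x i.succ)) := by
      intro m
      refine hJ.trans ?_
      rw [span_range_succ, ← sup_assoc]
      refine sup_le_sup_right (sup_le (le_sup_left.trans (le_col _ _)) ?_) _
      rw [Ideal.span_singleton_le_iff_mem, mem_col, ← pow_succ]
      exact Submodule.mem_sup_right (Ideal.mem_span_singleton_self _)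
    have A : ∀ m, QLI J (m * t ^ d) (I ⊔ Ideal.span {x 0 ^ m}) := by
      intro m
      induction m with
      | zero => simp [QLI]
      | succ m ihm =>
        rw [Nat.succ_mul, add_comm]
        refine QLI.split (y := x 0 ^ m) (ih _ _ (hcol m) ?_).1 (ihm.mono ?_)
        · intro i
          exact le_col _ _ (Submodule.mem_sup_left (hx i.succ))
        · exact sup_le (le_sup_of_le_left le_sup_left) le_sup_right
    have hIt : I ⊔ Ideal.span {x 0 ^ t} = I :=
      sup_eq_left.2 ((Ideal.span_singleton_le_iff_mem _).2 (hx 0))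
    constructor
    · have := A t
      rw [hIt] at this
      rwa [pow_succ, mul_comm]
    · intro hprod
      obtain ⟨t, rfl⟩ : ∃ s, t = s + 1 := ⟨t - 1, by omega⟩
      have hc := hcol t
      rw [hIt] at hc
      have h1 := (ih _ _ hc (fun i => le_col _ _ (hx i.succ))).2 (by
        rw [mem_col]
        rw [Fin.prod_univ_succ] at hprod
        simpa using hprod)
      have h2 := QLI.split h1 (A t)
      convert h2 using 1
      have : 0 < (t + 1) ^ d := by positivity
      rw [pow_succ, mul_add, mul_one, mul_comm t]
      omega

/-- A Q-sequence satisfies the monomial property. -/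
lemma IsQSequence.monomial {S : Type u} [CommRing S] {d : ℕ} {x : Fin d → S} (H : IsQSequence x)
    (t : ℕ) : ∏ i, x i ^ t ∉ pw x (t + 1) := by
  intro hmem
  have h := H.2 (t + 1) (by omega)
  have h' : (((t + 1) ^ d : ℕ) : ℕ∞) ≤ quasilength S (Ideal.span (Set.range x))
      (S ⧸ Ideal.span (Set.range fun i => x i ^ (t + 1))) := by
    push_cast at h ⊢; exact h
  rw [quasilength_ge] at h'
  have := h' _ ((QLI_monomial (Nat.succ_pos t) d (pw x (t + 1)) x le_sup_right (pw_mem x _)).2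
    (by simpa using hmem))
  have h0 : 0 < (t + 1) ^ d := by positivity
  rw [Nat.succ_eq_add_one] at this
  omega

lemma isQSequence_of {S : Type u} [CommRing S] {d : ℕ} {x : Fin d → S}
    (H : ∀ t h, 0 < t → QLI (Ideal.span (Set.range x)) h (pw x t) → t ^ d ≤ h) : IsQSequence x := by
  refine ⟨fun h => ?_, fun t ht => ?_⟩
  · have := H 1 0 one_pos (by simpa [QLI, pw] using h)
    simp at this
  · have := (quasilength_ge (J := Ideal.span (Set.range x)) (I := pw x t) (n := t ^ d)).2
      (fun h hh => H t h ht hh)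
    push_cast at this
    exact this

end RobustAux

namespace RobustAux
open IsLocalRing

lemma span_pow_le_pw {R : Type u} [CommRing R] {d : ℕ} (x : Fin d → R) (n : ℕ) (hn : 0 < n) :
    Ideal.span (Set.range x) ^ (d * n + 1) ≤ pw x n := by
  induction d with
  | zero => simp
  | succ d ih =>
    unfold pw
    rw [span_range_succ, span_range_succ, show (d + 1) * n + 1 = n + (d * n + 1) by ring]
    refine Ideal.sup_pow_add_le_pow_sup_pow.trans (sup_le_sup ?_ (ih _))
    rw [Ideal.span_singleton_pow]

lemma mpow_le_pw {R : Type u} [CommRing R] {d : ℕ} {x : Fin d → R} {m : Ideal R} {k : ℕ}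
    (h : m ^ k ≤ Ideal.span (Set.range x)) (n : ℕ) (hn : 0 < n) : m ^ (k * (d * n + 1)) ≤ pw x n := by
  rw [pow_mul]
  exact (Ideal.pow_right_mono h _).trans (span_pow_le_pw x n hn)

lemma len_ne_top {R : Type u} [CommRing R] [IsNoetherianRing R] [IsLocalRing R] {I : Ideal R} {k : ℕ}
    (h : maximalIdeal R ^ k ≤ I) : len I ≠ ⊤ := by
  by_cases hI : I = ⊤
  · rw [hI, len_top]; exact ENat.zero_ne_top
  have hmin : maximalIdeal R ∈ I.minimalPrimes := by
    refine ⟨⟨inferInstance, le_maximalIdeal hI⟩, ?_⟩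
    rintro q ⟨hq, hIq⟩ _
    exact hq.le_of_pow_le (h.trans hIq)
  have := quotient_artinian_of_mem_minimalPrimes_of_isLocalRing I hmin
  unfold len
  rw [Module.length_eq_of_surjective (R := R ⧸ I) Ideal.Quotient.mk_surjective]
  exact Module.length_ne_top

lemma exists_params (A : Type u) [CommRing A] [IsNoetherianRing A] [IsLocalRing A] :
    ∃ (r : ℕ) (z : Fin r → A), ringKrullDim A = r ∧
      (Ideal.span (Set.range z)).radical = maximalIdeal A := by
  obtain ⟨s, hs, hc⟩ := Ideal.exists_finset_card_eq_height_of_isNoetherianRing (maximalIdeal A)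
  refine ⟨s.card, fun i => (s.equivFin.symm i : A), ?_, ?_⟩
  · rw [← IsLocalRing.maximalIdeal_height_eq_ringKrullDim, ← hc]; rfl
  · have : Set.range (fun i => (s.equivFin.symm i : A)) = s := by
      ext a
      constructor
      · rintro ⟨i, rfl⟩; exact (s.equivFin.symm i).2
      · intro ha; exact ⟨s.equivFin ⟨a, ha⟩, by simp⟩
    rw [this]
    have hne : Ideal.span (s : Set A) ≠ ⊤ := fun h => by
      have := hs.1.2
      rw [h] at this
      exact (IsLocalRing.maximalIdeal.isMaximal A).ne_top (top_unique this)
    refine le_antisymm ?_ ?_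
    · exact (Ideal.IsPrime.radical_le_iff inferInstance).2 hs.1.2
    · rw [Ideal.radical_eq_sInf]
      refine le_sInf ?_
      rintro q ⟨hq, hqp⟩
      exact hs.2 ⟨hqp, hq⟩ (le_maximalIdeal hqp.ne_top)

lemma exists_pow_le {A : Type u} [CommRing A] [IsNoetherianRing A] {I m : Ideal A}
    (h : I.radical = m) : ∃ k, m ^ k ≤ I := by
  subst h
  exact I.exists_radical_pow_le_of_fg (Ideal.fg_of_isNoetherianRing _)

lemma exists_params_quot {R : Type u} [CommRing R] [IsNoetherianRing R] [IsLocalRing R] [IsDomain R]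
    {d : ℕ} (hd : ringKrullDim R = d) {c : R} (hc : c ≠ 0) (hcm : c ∈ maximalIdeal R) :
    ∃ (r : ℕ) (z : Fin r → R) (k : ℕ), r + 1 = d ∧
      maximalIdeal R ^ k ≤ Ideal.span {c} ⊔ Ideal.span (Set.range z) ∧ ∀ i, z i ∈ maximalIdeal R := by
  have hne : Ideal.span {c} ≠ ⊤ := fun h => by
    rw [Ideal.span_singleton_eq_top] at h
    exact hcm h
  have : Nontrivial (R ⧸ Ideal.span {c}) := Ideal.Quotient.nontrivial_iff.2 hne
  have : IsLocalRing (R ⧸ Ideal.span {c}) := IsLocalRing.of_surjective' (Ideal.Quotient.mk _) Ideal.Quotient.mk_surjective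
  obtain ⟨r, z, hr, hz⟩ := exists_params (R ⧸ Ideal.span {c})
  have hdim := ringKrullDim_quotient_span_singleton_succ_eq_ringKrullDim_of_mem_nonZeroDivisors
    (mem_nonZeroDivisors_of_ne_zero hc) hcm
  choose w hw using fun i => Ideal.Quotient.mk_surjective (z i)
  obtain ⟨k, hk⟩ := exists_pow_le hz
  have hmap : (maximalIdeal R).map (Ideal.Quotient.mk (Ideal.span {c})) =
      maximalIdeal (R ⧸ Ideal.span {c}) :=
    IsLocalRing.map_maximalIdeal_of_surjective _ Ideal.Quotient.mk_surjective
  refine ⟨r, w, k, ?_, ?_, ?_⟩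
  · rw [hr, hd] at hdim
    exact_mod_cast hdim
  · have h1 : (maximalIdeal R ^ k).map (Ideal.Quotient.mk (Ideal.span {c})) ≤
        (Ideal.span (Set.range w)).map (Ideal.Quotient.mk (Ideal.span {c})) := by
      rw [Ideal.map_pow, hmap, Ideal.map_span, ← Set.range_comp]
      have : (Ideal.Quotient.mk (Ideal.span {c})) ∘ w = z := funext hw
      rwa [this]
    have h2 := Ideal.map_le_iff_le_comap.1 h1
    refine h2.trans ?_
    rw [Ideal.comap_map_of_surjective _ Ideal.Quotient.mk_surjective, sup_comm]
    refine sup_le_sup_right ?_ _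
    rw [← RingHom.ker_eq_comap_bot, Ideal.mk_ker]
  · intro i
    have hzi : z i ∈ maximalIdeal (R ⧸ Ideal.span {c}) := by
      rw [← hz]; exact Ideal.le_radical (Ideal.subset_span ⟨i, rfl⟩)
    rw [← hw i] at hzi
    rw [mem_maximalIdeal, mem_nonunits_iff] at hzi ⊢
    exact fun h => hzi (h.map _)

/-- `ℓ(R/(c, x^n))` grows at most like `n^(d-1)`. -/
lemma len_small {R : Type u} [CommRing R] [IsNoetherianRing R] [IsLocalRing R] [IsDomain R]
    {d : ℕ} (hd : ringKrullDim R = d) {c : R} (hc : c ≠ 0) {x : Fin d → R} {k : ℕ}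
    (hx : maximalIdeal R ^ k ≤ Ideal.span (Set.range x)) :
    ∃ C : ℕ, ∀ n : ℕ, 0 < n → (n : ℕ∞) * len (Ideal.span {c} ⊔ pw x n) ≤ C * (n : ℕ∞) ^ d := by
  by_cases hcm : c ∈ maximalIdeal R
  swap
  · refine ⟨0, fun n _ => ?_⟩
    have : IsUnit c := by
      rwa [mem_maximalIdeal, mem_nonunits_iff, not_not] at hcm
    rw [Ideal.span_singleton_eq_top.2 this, top_sup_eq, len_top]
    simp
  obtain ⟨r, z, k', hr, hz, hzm⟩ := exists_params_quot hd hc hcm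
  obtain ⟨C, hC⟩ := ENat.ne_top_iff_exists.1 (len_ne_top hz)
  refine ⟨(k * (d + 1)) ^ r * C, fun n hn => ?_⟩
  have h1 : Ideal.span {c} ⊔ pw z (k * (d + 1) * n) ≤ Ideal.span {c} ⊔ pw x n := by
    refine sup_le_sup_left (pw_le fun i => ?_) _
    refine mpow_le_pw hx n hn ?_
    refine Ideal.pow_le_pow_right (m := k * (d * n + 1)) (n := k * (d + 1) * n) ?_
      (Ideal.pow_mem_pow (hzm i) _)
    rw [mul_assoc]
    refine Nat.mul_le_mul_left _ ?_
    rw [add_mul]; omega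
  have h2 := (len_anti h1).trans (len_pw_le (Ideal.span {c}) z (k * (d + 1) * n))
  rw [← hC] at h2
  calc (n : ℕ∞) * len (Ideal.span {c} ⊔ pw x n) ≤ n * (((k * (d + 1) * n : ℕ) : ℕ∞) ^ r * C) := by gcongr
    _ = _ := by
      subst hr
      have : (((k * (r + 1 + 1) * n : ℕ) : ℕ∞)) ^ r = (((k * (r + 1 + 1) : ℕ) : ℕ∞)) ^ r * (n : ℕ∞) ^ r := by
        rw [← mul_pow, ← Nat.cast_mul]
      rw [this, pow_succ, Nat.cast_mul (_ ^ _) C, Nat.cast_pow]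
      ring

lemma artin_rees_col {R : Type u} [CommRing R] [IsNoetherianRing R]
    (m p : Ideal R) [p.IsPrime] {y : R} (hy : y ∉ p) :
    ∃ k, ∀ n ≥ k, col (p ⊔ m ^ n) y ≤ p ⊔ m ^ (n - k) := by
  obtain ⟨k, hk⟩ := Ideal.exists_pow_inf_eq_pow_smul m
    (Submodule.map p.mkQ (Ideal.span {y} : Submodule R R))
  refine ⟨k, fun n hn r hr => ?_⟩
  rw [mem_col] at hr
  obtain ⟨a, ha, b, hb, hab⟩ := Submodule.mem_sup.1 hr
  have h1 : p.mkQ (y * r) ∈ m ^ n • (⊤ : Submodule R (R ⧸ p)) ⊓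
      Submodule.map p.mkQ (Ideal.span {y} : Submodule R R) := by
    refine ⟨?_, ⟨y * r, Ideal.mem_span_singleton.2 ⟨r, rfl⟩, rfl⟩⟩
    have : p.mkQ (y * r) = b • p.mkQ 1 := by
      rw [← map_smul, smul_eq_mul, mul_one, ← hab, map_add]
      have : p.mkQ a = 0 := (Submodule.Quotient.mk_eq_zero _).2 ha
      rw [this, zero_add]
    rw [this]
    exact Submodule.smul_mem_smul hb trivial
  rw [hk n hn] at h1
  have h2 := (Submodule.smul_mono (le_refl (m ^ (n - k))) inf_le_right) h1
  rw [← Submodule.map_smul''] at h2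
  obtain ⟨w, hw, hwr⟩ := h2
  have hw' : w ∈ m ^ (n - k) * Ideal.span {y} := hw
  rw [Ideal.mem_mul_span_singleton] at hw'
  obtain ⟨v, hv, rfl⟩ := hw'
  have h3 : v * y - y * r ∈ p := (Submodule.Quotient.eq p).1 hwr
  have h4 : y * (r - v) ∈ p := by
    have : y * (r - v) = -(v * y - y * r) := by ring
    rw [this]; exact p.neg_mem h3
  have h5 := (Ideal.IsPrime.mem_or_mem inferInstance h4).resolve_left hy
  have : r = (r - v) + v := by ring
  rw [this]
  exact Submodule.add_mem_sup h5 hv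

lemma pow_diff_le (n k d : ℕ) (hk : k ≤ n) : n ^ (d + 1) ≤ (n - k) ^ (d + 1) + (d + 1) * k * n ^ d := by
  obtain ⟨a, rfl⟩ := Nat.exists_eq_add_of_le hk
  rw [Nat.add_sub_cancel_left]
  induction d with
  | zero => simp; omega
  | succ d ih =>
    calc (k + a) ^ (d + 1 + 1) = (k + a) * (k + a) ^ (d + 1) := by ring
      _ ≤ (k + a) * (a ^ (d + 1) + (d + 1) * k * (k + a) ^ d) := by gcongr
      _ = a ^ (d + 2) + k * a ^ (d + 1) + (d + 1) * k * (k + a) ^ (d + 1) := by ring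
      _ ≤ a ^ (d + 2) + k * (k + a) ^ (d + 1) + (d + 1) * k * (k + a) ^ (d + 1) := by
        gcongr; omega
      _ = _ := by ring

lemma len_lower_aux {R : Type u} [CommRing R] [IsNoetherianRing R] [IsLocalRing R] (d : ℕ) :
    ∀ s : LTSeries (PrimeSpectrum R), s.length = d →
    ∃ C : ℕ, ∀ n, 0 < n → ((n ^ d : ℕ) : ℕ∞) ≤ C * len (s.head.asIdeal ⊔ maximalIdeal R ^ n) := by
  have hpos : ∀ (q : PrimeSpectrum R) (n : ℕ), 0 < n → 1 ≤ len (q.asIdeal ⊔ maximalIdeal R ^ n) := by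
    intro q n hn
    refine len_pos fun h => ?_
    refine (IsLocalRing.maximalIdeal.isMaximal R).ne_top (top_unique (h.symm.le.trans ?_))
    exact sup_le (le_maximalIdeal q.2.ne_top) (Ideal.pow_le_self hn.ne')
  induction d with
  | zero =>
    intro s _
    exact ⟨1, fun n hn => by simpa using hpos s.head n hn⟩
  | succ d ih =>
    intro s hs
    have hs0 : s.length ≠ 0 := by omega
    obtain ⟨C, hC⟩ := ih (s.tail hs0) (by simp [hs])
    have hlt : s.head < (s.tail hs0).head := by
      rw [RelSeries.head_tail]
      have : NeZero s.length := ⟨hs0⟩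
      refine s.strictMono ?_
      rw [Fin.lt_def]
      simp only [Fin.val_zero]
      have : ((1 : Fin (s.length + 1)) : ℕ) = 1 := by
        rw [Fin.val_one']; exact Nat.mod_eq_of_lt (by omega)
      omega
    obtain ⟨y, hy1, hy0⟩ := SetLike.exists_of_lt (PrimeSpectrum.asIdeal_lt_asIdeal _ _ |>.2 hlt)
    set p0 := s.head.asIdeal with hp0
    set p1 := (s.tail hs0).head.asIdeal
    have hle : p0 ≤ p1 := (PrimeSpectrum.asIdeal_lt_asIdeal _ _ |>.2 hlt).le
    obtain ⟨k, hk⟩ := artin_rees_col (maximalIdeal R) p0 hy0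
    refine ⟨(d + 1) * (k + 1) * C + (k + 1) ^ (d + 1), fun n => ?_⟩
    set B := (d + 1) * (k + 1) * C + (k + 1) ^ (d + 1) with hB
    induction n using Nat.strong_induction_on with
    | _ n ihn =>
    intro hn
    by_cases hnk : n ≤ k + 1
    · have h1 : n ^ (d + 1) ≤ B := (Nat.pow_le_pow_left hnk _).trans (by omega)
      calc ((n ^ (d + 1) : ℕ) : ℕ∞) ≤ B * 1 := by rw [mul_one]; exact_mod_cast h1
        _ ≤ _ := by gcongr; exact hpos _ n hn
    · have h1 : n ^ (d + 1) ≤ (n - (k + 1)) ^ (d + 1) + (d + 1) * (k + 1) * n ^ d :=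
        pow_diff_le n (k + 1) d (by omega)
      have h2 := ihn (n - (k + 1)) (by omega) (by omega)
      rw [len_split _ y]
      have h3 : len (p0 ⊔ maximalIdeal R ^ (n - (k + 1))) ≤ len (col (p0 ⊔ maximalIdeal R ^ n) y) :=
        len_anti ((hk n (by omega)).trans (sup_le_sup_left (Ideal.pow_le_pow_right (by omega)) _))
      have h4 : len (p1 ⊔ maximalIdeal R ^ n) ≤ len (p0 ⊔ maximalIdeal R ^ n ⊔ Ideal.span {y}) := by
        refine len_anti (sup_le (sup_le_sup_right hle _) ?_)
        rw [Ideal.span_singleton_le_iff_mem]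
        exact Submodule.mem_sup_left hy1
      have h5 : (((d + 1) * (k + 1) * n ^ d : ℕ) : ℕ∞) ≤ B * len (p1 ⊔ maximalIdeal R ^ n) := by
        calc (((d + 1) * (k + 1) * n ^ d : ℕ) : ℕ∞) = (((d + 1) * (k + 1) : ℕ) : ℕ∞) * ((n ^ d : ℕ) : ℕ∞) := by
              push_cast; ring
          _ ≤ (((d + 1) * (k + 1) : ℕ) : ℕ∞) * (C * len (p1 ⊔ maximalIdeal R ^ n)) := by
              gcongr; exact hC n hn
          _ = (((d + 1) * (k + 1) * C : ℕ) : ℕ∞) * len (p1 ⊔ maximalIdeal R ^ n) := by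
              push_cast; ring
          _ ≤ _ := by gcongr; rw [hB]; omega
      calc ((n ^ (d + 1) : ℕ) : ℕ∞) ≤ (((n - (k + 1)) ^ (d + 1) + (d + 1) * (k + 1) * n ^ d : ℕ) : ℕ∞) := by
            exact_mod_cast h1
        _ = (((n - (k + 1)) ^ (d + 1) : ℕ) : ℕ∞) + (((d + 1) * (k + 1) * n ^ d : ℕ) : ℕ∞) := by push_cast; ring
        _ ≤ B * len (p0 ⊔ maximalIdeal R ^ (n - (k + 1))) + B * len (p1 ⊔ maximalIdeal R ^ n) := by
            gcongr
        _ ≤ _ := by rw [mul_add]; gcongr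

/-- `ℓ(R/x^n)` grows at least like `n^d`. -/
lemma len_lower {R : Type u} [CommRing R] [IsNoetherianRing R] [IsLocalRing R] {d : ℕ}
    (hd : ringKrullDim R = d) {x : Fin d → R} (hx : ∀ i, x i ∈ maximalIdeal R) :
    ∃ C : ℕ, ∀ n : ℕ, 0 < n → (n : ℕ∞) ^ d ≤ C * len (pw x n) := by
  obtain ⟨s, hs⟩ : ∃ s : LTSeries (PrimeSpectrum R), s.length = d := by
    have : ((d : ℕ∞) : WithBot ℕ∞) ≤ Order.krullDim (PrimeSpectrum R) := by
      unfold ringKrullDim at hd; rw [hd]; rfl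
    exact Order.le_krullDim_iff.1 this
  obtain ⟨C, hC⟩ := len_lower_aux d s hs
  refine ⟨C, fun n hn => ?_⟩
  have := hC n hn
  push_cast at this
  refine this.trans ?_
  gcongr
  refine len_anti (pw_le fun i => Submodule.mem_sup_right (Ideal.pow_mem_pow (hx i) n))

end RobustAux

namespace RobustAux
open IsLocalRing

lemma decay_false (φ : ℕ → ℝ) (ρ δ C P : ℝ) (hρ : ρ < 1) (hδ : 0 < δ) (hP : 1 < P)
    (h1 : ∀ k, δ ≤ φ k) (h2 : ∀ k, φ (k + 1) ≤ ρ * φ k + C * P⁻¹ ^ k) : False := by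
  have hlim : Filter.Tendsto (fun k : ℕ => C * P⁻¹ ^ k) Filter.atTop (nhds (C * 0)) :=
    (tendsto_pow_atTop_nhds_zero_of_lt_one (by positivity) (inv_lt_one_of_one_lt₀ hP)).const_mul C
  rw [mul_zero] at hlim
  set ε := (1 - ρ) * δ / 2 with hε
  have hεp : 0 < ε := by
    have : 0 < 1 - ρ := by linarith
    positivity
  obtain ⟨k0, hk0⟩ := Filter.eventually_atTop.1 (hlim.eventually (gt_mem_nhds hεp))
  have h3 : ∀ j : ℕ, φ (k0 + j) ≤ φ k0 - j * ε := by
    intro j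
    induction j with
    | zero => simp
    | succ j ih =>
      have a1 := h2 (k0 + j)
      have a2 := hk0 (k0 + j) (by omega)
      have a3 : (1 - ρ) * δ ≤ (1 - ρ) * φ (k0 + j) :=
        mul_le_mul_of_nonneg_left (h1 _) (by linarith)
      push_cast
      rw [← add_assoc]
      nlinarith
  obtain ⟨j, hj⟩ := exists_nat_gt (φ k0 / ε)
  have := h3 j
  have := h1 (k0 + j)
  rw [div_lt_iff₀ hεp] at hj
  linarith

lemma exists_P (p : ℕ) (hp : 2 ≤ p) (t d h : ℕ) (ht : 0 < t) (hh : h < t ^ d) :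
    ∃ a m : ℕ, 0 < a ∧ p ^ a ≤ m * t ∧ m ^ d * h < (p ^ a) ^ d := by
  have h0 : Filter.Tendsto (fun a : ℕ => (t : ℝ) * (p : ℝ)⁻¹ ^ a) Filter.atTop (nhds ((t : ℝ) * 0)) :=
    (tendsto_pow_atTop_nhds_zero_of_lt_one (by positivity)
      (inv_lt_one_of_one_lt₀ (by exact_mod_cast hp))).const_mul _
  have h1 : Filter.Tendsto (fun a : ℕ => (1 + (t : ℝ) * (p : ℝ)⁻¹ ^ a) ^ d * h) Filter.atTop
      (nhds ((1 + (t : ℝ) * 0) ^ d * h)) := ((h0.const_add 1).pow d).mul_const _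
  have h2 : ((1 + (t : ℝ) * 0) ^ d * h) < (t : ℝ) ^ d := by
    simp only [mul_zero, add_zero, one_pow, one_mul]; exact_mod_cast hh
  obtain ⟨a, ha⟩ := Filter.eventually_atTop.1 (h1.eventually (gt_mem_nhds h2))
  have ha := ha (a + 1) (by omega)
  refine ⟨a + 1, p ^ (a + 1) / t + 1, by omega, ?_, ?_⟩
  · have := Nat.lt_div_mul_add (a := p ^ (a + 1)) ht
    rw [add_mul]; omega
  · have hP : (0 : ℝ) < (p : ℝ) ^ (a + 1) := by positivity
    have ht' : (0 : ℝ) < t := by exact_mod_cast ht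
    have h3 : ((p ^ (a + 1) / t + 1 : ℕ) : ℝ) * t ≤ (1 + (t : ℝ) * (p : ℝ)⁻¹ ^ (a + 1)) * (p : ℝ) ^ (a + 1) := by
      have e1 : (1 + (t : ℝ) * (p : ℝ)⁻¹ ^ (a + 1)) * (p : ℝ) ^ (a + 1) = (p : ℝ) ^ (a + 1) + t := by
        rw [inv_pow]; field_simp
      rw [e1]
      have : (p ^ (a + 1) / t + 1) * t ≤ p ^ (a + 1) + t := by
        rw [add_mul, one_mul]; exact Nat.add_le_add_right (Nat.div_mul_le_self _ _) _
      exact_mod_cast this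
    have h4 : (((p ^ (a + 1) / t + 1 : ℕ) : ℝ) * t) ^ d ≤ ((1 + (t : ℝ) * (p : ℝ)⁻¹ ^ (a + 1)) * (p : ℝ) ^ (a + 1)) ^ d := by
      gcongr
    have h5 : (((p ^ (a + 1) / t + 1 : ℕ) : ℝ)) ^ d * h < ((p : ℝ) ^ (a + 1)) ^ d := by
      have h6 : (t : ℝ) ^ d * ((((p ^ (a + 1) / t + 1 : ℕ) : ℝ)) ^ d * h) < (t : ℝ) ^ d * ((p : ℝ) ^ (a + 1)) ^ d := by
        calc (t : ℝ) ^ d * ((((p ^ (a + 1) / t + 1 : ℕ) : ℝ)) ^ d * h)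
            = (((p ^ (a + 1) / t + 1 : ℕ) : ℝ) * t) ^ d * h := by rw [mul_pow]; ring
          _ ≤ ((1 + (t : ℝ) * (p : ℝ)⁻¹ ^ (a + 1)) * (p : ℝ) ^ (a + 1)) ^ d * h := by gcongr
          _ = ((1 + (t : ℝ) * (p : ℝ)⁻¹ ^ (a + 1)) ^ d * h) * ((p : ℝ) ^ (a + 1)) ^ d := by
              rw [mul_pow]; ring
          _ < _ := by gcongr
      exact lt_of_mul_lt_mul_left h6 (by positivity)
    exact_mod_cast h5

lemma growth_false (f : ℕ → ℕ) (p : ℕ) (hp : 2 ≤ p) (d t h A C : ℕ) (ht : 0 < t) (hh : h < t ^ d)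
    (hmono : Monotone f) (hmul : ∀ n m, 0 < n → 0 < m → f (n * m) ≤ m ^ d * f n)
    (hlow : ∀ n, 0 < n → n ^ d ≤ A * f n)
    (hrec : ∀ e, p ^ e * f (t * p ^ e) ≤ h * p ^ e * f (p ^ e) + C * (p ^ e) ^ d) : False := by
  obtain ⟨a, m, ha, hPm, hm⟩ := exists_P p hp t d h ht hh
  set P := p ^ a with hPdef
  have hP1 : 1 < P := Nat.one_lt_pow ha.ne' (by omega)
  have hm0 : 0 < m := by
    rcases Nat.eq_zero_or_pos m with h0 | h0
    · rw [h0] at hPm; omega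
    · exact h0
  have hA : 0 < A := by
    have := hlow 1 one_pos
    rcases Nat.eq_zero_or_pos A with h0 | h0
    · rw [h0] at this; simp at this
    · exact h0
  have key : ∀ k, P ^ k * f (P ^ (k + 1)) ≤ m ^ d * h * P ^ k * f (P ^ k) + m ^ d * C * (P ^ k) ^ d := by
    intro k
    have h1 := hrec (a * k)
    rw [pow_mul, ← hPdef] at h1
    have hq : 0 < P ^ k := by positivity
    calc P ^ k * f (P ^ (k + 1)) ≤ P ^ k * f ((t * P ^ k) * m) := by
          refine Nat.mul_le_mul_left _ (hmono ?_)
          rw [pow_succ]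
          nlinarith
      _ ≤ P ^ k * (m ^ d * f (t * P ^ k)) := Nat.mul_le_mul_left _ (hmul _ _ (by positivity) hm0)
      _ = m ^ d * (P ^ k * f (t * P ^ k)) := by ring
      _ ≤ m ^ d * (h * P ^ k * f (P ^ k) + C * (P ^ k) ^ d) := by gcongr
      _ = _ := by ring
  have hPr : (1 : ℝ) < P := by exact_mod_cast hP1
  have hP0 : (0 : ℝ) < P := by linarith
  refine decay_false (fun k => (f (P ^ k) : ℝ) / ((P : ℝ) ^ k) ^ d) ((m ^ d * h : ℕ) / (P : ℝ) ^ d) (1 / A)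
    ((m ^ d * C : ℕ) / (P : ℝ) ^ d) P ?_ (by positivity) hPr ?_ ?_
  · rw [div_lt_one (by positivity)]; exact_mod_cast hm
  · intro k
    rw [div_le_div_iff₀ (by positivity) (by positivity), one_mul]
    have := hlow (P ^ k) (by positivity)
    rw [mul_comm]
    exact_mod_cast this
  · intro k
    have h1 : (P : ℝ) ^ k * f (P ^ (k + 1)) ≤ (m ^ d * h : ℕ) * (P : ℝ) ^ k * f (P ^ k) + (m ^ d * C : ℕ) * ((P : ℝ) ^ k) ^ d := by
      exact_mod_cast key k
    have hX : (0 : ℝ) < (P : ℝ) ^ k := by positivity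
    rw [pow_succ (P : ℝ) k, mul_pow, inv_pow]
    generalize (P : ℝ) ^ k = X at *
    generalize (f (P ^ (k + 1)) : ℝ) = F at *
    have hY : (0 : ℝ) < X ^ d := by positivity
    have hZ : (0 : ℝ) < (P : ℝ) ^ d := by positivity
    rw [div_le_iff₀ (by positivity)]
    have : (((m ^ d * h : ℕ) : ℝ) / (P : ℝ) ^ d * ((f (P ^ k) : ℝ) / X ^ d) + ((m ^ d * C : ℕ) : ℝ) / (P : ℝ) ^ d * X⁻¹) * (X ^ d * (P : ℝ) ^ d)
      = ((m ^ d * h : ℕ) * X * f (P ^ k) + (m ^ d * C : ℕ) * X ^ d) / X := by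
      field_simp
    rw [this, le_div_iff₀ hX]
    linarith
lemma col_step {R : Type u} [CommRing R] {d : ℕ} {x : Fin d → R} {M : Ideal R} {σ c : R} {n q N : ℕ}
    (h1 : pw x n ≤ M) (h2 : ∀ i, c ^ N * x i ^ q * σ ∈ M) :
    len M ≤ len (M ⊔ Ideal.span {σ}) + (len (pw x q) + len (Ideal.span {c ^ N} ⊔ pw x n)) := by
  rw [len_split M σ, len_split (col M σ) (c ^ N), add_comm]
  gcongr
  · refine len_anti (pw_le fun i => ?_)
    rw [mem_col, mem_col]
    convert h2 i using 1
    ring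
  · refine len_anti (sup_le le_sup_right ((h1.trans (le_col _ _)).trans le_sup_left))

lemma eps_mono {R : Type u} [CommRing R] (c : R) (I : Ideal R) {N N' : ℕ} (h : N ≤ N') :
    len (Ideal.span {c ^ N} ⊔ I) ≤ len (Ideal.span {c ^ N'} ⊔ I) := by
  refine len_anti (sup_le_sup_right ?_ _)
  rw [Ideal.span_singleton_le_span_singleton]
  exact pow_dvd_pow c h

lemma core_induct {R : Type u} [CommRing R] [IsDomain R] {K : Type u} [Field K] [Algebra R K]
    [IsFractionRing R K]
    {S : Type u} [CommRing S] [Algebra R S] (Q : ℕ → ℕ) (c : R) (ev : ℕ → S →+* K)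
    (hev : ∀ e a, ev e (algebraMap R S a) = algebraMap R K (a ^ Q e))
    (hden : ∀ s : S, ∃ N : ℕ, ∀ e, ∃ r : R, algebraMap R K r = algebraMap R K (c ^ N) * ev e s)
    {d : ℕ} (x : Fin d → R) (t h : ℕ) :
    ∀ (U : Ideal S) (M : ℕ → Ideal R), (∀ e, pw x (t * Q e) ≤ M e) →
      (∀ F ∈ U, ∃ N : ℕ, ∀ e, ∃ r ∈ M e, algebraMap R K r = algebraMap R K (c ^ N) * ev e F) →
      QLI (Ideal.span (Set.range fun i => algebraMap R S (x i))) h U →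
      ∃ N : ℕ, ∀ e, len (M e) ≤ h * (len (pw x (Q e)) + len (Ideal.span {c ^ N} ⊔ pw x (t * Q e)))
        + len (Ideal.span {c ^ N} ⊔ pw x (t * Q e)) := by
  have hinj : Function.Injective (algebraMap R K) := IsFractionRing.injective R K
  induction h with
  | zero =>
    intro U M hM hU hQ
    have h1 : (1 : S) ∈ U := by rw [show U = ⊤ from hQ]; trivial
    obtain ⟨N, hN⟩ := hU 1 h1
    refine ⟨N, fun e => ?_⟩
    obtain ⟨r, hr, hr'⟩ := hN e
    rw [map_one, mul_one] at hr'
    have := hinj hr'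
    subst this
    simp only [Nat.cast_zero, zero_mul, zero_add]
    refine len_anti (sup_le ?_ (hM e))
    rwa [Ideal.span_singleton_le_iff_mem]
  | succ h ih =>
    intro U M hM hU hQ
    obtain ⟨s, hs, hQ'⟩ := hQ
    obtain ⟨Ns, hNs⟩ := hden s
    choose σ hσ using hNs
    obtain ⟨N1, hN1⟩ := ih (U ⊔ Ideal.span {s}) (fun e => M e ⊔ Ideal.span {σ e})
      (fun e => (hM e).trans le_sup_left) (by
        intro F hF
        obtain ⟨a, ha, b, hb, rfl⟩ := Submodule.mem_sup.1 hF
        obtain ⟨b, rfl⟩ := Ideal.mem_span_singleton.1 hb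
        obtain ⟨Na, hNa⟩ := hU a ha
        obtain ⟨Nb, hNb⟩ := hden b
        refine ⟨Na + Nb + Ns, fun e => ?_⟩
        obtain ⟨ra, hra, hra'⟩ := hNa e
        obtain ⟨rb, hrb'⟩ := hNb e
        refine ⟨c ^ (Nb + Ns) * ra + c ^ Na * rb * σ e, ?_, ?_⟩
        · exact Submodule.add_mem_sup ((M e).mul_mem_left _ hra)
            (Ideal.mul_mem_left _ _ (Ideal.mem_span_singleton_self _))
        · simp only [map_add, map_mul, hra', hrb', hσ e, pow_add]
          ring) hQ'
    have hx : ∀ i, ∃ N : ℕ, ∀ e, ∃ r ∈ M e, algebraMap R K r =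
        algebraMap R K (c ^ N) * ev e (algebraMap R S (x i) * s) := fun i =>
      hU _ (hs _ (Ideal.subset_span ⟨i, rfl⟩))
    choose Nx hNx using hx
    have hstep : ∀ e i, c ^ (∑ j, Nx j) * x i ^ Q e * σ e ∈ M e := by
      intro e i
      obtain ⟨r, hr, hr'⟩ := hNx i e
      have hle : Nx i ≤ ∑ j, Nx j := Finset.single_le_sum (f := Nx) (fun _ _ => Nat.zero_le _) (Finset.mem_univ i)
      obtain ⟨z, hz⟩ := Nat.exists_eq_add_of_le hle
      have : c ^ (∑ j, Nx j) * x i ^ Q e * σ e = c ^ (z + Ns) * r := by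
        apply hinj
        rw [hz]
        simp only [map_mul, hr', hσ e, hev, pow_add]
        ring
      rw [this]
      exact (M e).mul_mem_left _ hr
    refine ⟨N1 + ∑ j, Nx j, fun e => ?_⟩
    have a1 := col_step (hM e) (hstep e)
    have a2 := hN1 e
    have a3 := eps_mono c (pw x (t * Q e)) (show N1 ≤ N1 + ∑ j, Nx j by omega)
    have a4 := eps_mono c (pw x (t * Q e)) (show ∑ j, Nx j ≤ N1 + ∑ j, Nx j by omega)
    set E := len (Ideal.span {c ^ (N1 + ∑ j, Nx j)} ⊔ pw x (t * Q e))
    set f := len (pw x (Q e))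
    calc len (M e) ≤ _ := a1
      _ ≤ (h * (f + E) + E) + (f + E) := by
          refine add_le_add (a2.trans ?_) (add_le_add le_rfl a4)
          gcongr
      _ = _ := by push_cast; ring

lemma core_claimA {R : Type u} [CommRing R] [IsNoetherianRing R] [IsLocalRing R] [IsDomain R]
    {K : Type u} [Field K] [Algebra R K] [IsFractionRing R K]
    {S : Type u} [CommRing S] [Algebra R S] (p : ℕ) (hp : 2 ≤ p) (c : R) (hc : c ≠ 0) (ev : ℕ → S →+* K)
    (hev : ∀ e a, ev e (algebraMap R S a) = algebraMap R K (a ^ p ^ e))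
    (hden : ∀ s : S, ∃ N : ℕ, ∀ e, ∃ r : R, algebraMap R K r = algebraMap R K (c ^ N) * ev e s)
    {d : ℕ} (hd : ringKrullDim R = d) (x : Fin d → R)
    (hx : (Ideal.span (Set.range x)).radical = maximalIdeal R) :
    IsQSequence (fun i => algebraMap R S (x i)) := by
  have hinj : Function.Injective (algebraMap R K) := IsFractionRing.injective R K
  refine isQSequence_of fun t h ht hQ => ?_
  by_contra hh
  push Not at hh
  obtain ⟨k, hk⟩ := exists_pow_le hx
  have hxm : ∀ i, x i ∈ maximalIdeal R := fun i => by
    rw [← hx]; exact Ideal.le_radical (Ideal.subset_span ⟨i, rfl⟩)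
  obtain ⟨N, hN⟩ := core_induct (fun e => p ^ e) c ev hev hden x t h _ (fun e => pw x (t * p ^ e))
    (fun e => le_rfl) (by
      intro F hF
      unfold pw at hF
      induction hF using Submodule.span_induction with
      | mem F hF =>
        obtain ⟨i, rfl⟩ := hF
        refine ⟨0, fun e => ⟨x i ^ (t * p ^ e), pw_mem _ _ _, ?_⟩⟩
        simp only [pow_zero, map_one, one_mul]
        rw [← map_pow, hev, ← pow_mul]
      | zero => exact ⟨0, fun e => ⟨0, Ideal.zero_mem _, by simp⟩⟩
      | add a b _ _ ha hb =>
        obtain ⟨Na, ha⟩ := ha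
        obtain ⟨Nb, hb⟩ := hb
        refine ⟨Na + Nb, fun e => ?_⟩
        obtain ⟨ra, hra, ha⟩ := ha e
        obtain ⟨rb, hrb, hb⟩ := hb e
        refine ⟨c ^ Nb * ra + c ^ Na * rb, add_mem (Ideal.mul_mem_left _ _ hra) (Ideal.mul_mem_left _ _ hrb), ?_⟩
        simp only [map_add, map_mul, ha, hb, pow_add]
        ring
      | smul b a _ ha =>
        obtain ⟨Na, ha⟩ := ha
        obtain ⟨Nb, hb⟩ := hden b
        refine ⟨Na + Nb, fun e => ?_⟩
        obtain ⟨ra, hra, ha⟩ := ha e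
        obtain ⟨rb, hb⟩ := hb e
        refine ⟨rb * ra, Ideal.mul_mem_left _ _ hra, ?_⟩
        simp only [map_mul, ha, hb, pow_add, smul_eq_mul]
        ring) hQ
  obtain ⟨C, hC⟩ := len_small hd (pow_ne_zero N hc) hk
  obtain ⟨A, hA⟩ := len_lower hd hxm
  have hfin : ∀ n, len (pw x n) ≠ ⊤ := by
    intro n
    have h1 := len_anti (pw_anti x (Nat.le_succ n))
    exact ne_top_of_le_ne_top (len_ne_top (mpow_le_pw hk (n + 1) (Nat.succ_pos _))) h1
  have hp0 : 0 < p := by omega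
  choose f hf using fun n => ENat.ne_top_iff_exists.1 (hfin n)
  refine growth_false f p hp d t h A ((h + 1) * C * t ^ d) ht hh ?_ ?_ ?_ ?_
  · intro a b hab
    have := len_anti (pw_anti x hab)
    rw [← hf, ← hf] at this
    exact_mod_cast this
  · intro n m _ _
    have := len_pw_mul_le x m n
    rw [← hf, ← hf] at this
    exact_mod_cast this
  · intro n hn
    have := hA n hn
    rw [← hf] at this
    exact_mod_cast this
  · intro e
    have hq : 0 < p ^ e := by positivity
    have h1 := hN e
    have h2 := hC (t * p ^ e) (by positivity)
    have hE : len (Ideal.span {c ^ N} ⊔ pw x (t * p ^ e)) ≠ ⊤ :=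
      ne_top_of_le_ne_top (hfin (t * p ^ e)) (len_anti le_sup_right)
    obtain ⟨E, hE⟩ := ENat.ne_top_iff_exists.1 hE
    rw [← hE] at h1 h2
    rw [← hf, ← hf] at h1
    have h1' : f (t * p ^ e) ≤ h * (f (p ^ e) + E) + E := by exact_mod_cast h1
    have h2' : t * p ^ e * E ≤ C * (t * p ^ e) ^ d := by exact_mod_cast h2
    have h3 : p ^ e * E ≤ C * t ^ d * (p ^ e) ^ d := by
      calc p ^ e * E ≤ t * p ^ e * E := by
            rw [mul_assoc]; exact Nat.le_mul_of_pos_left _ ht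
        _ ≤ _ := h2'
        _ = _ := by rw [mul_pow]; ring
    calc p ^ e * f (t * p ^ e) ≤ p ^ e * (h * (f (p ^ e) + E) + E) := by gcongr
      _ = h * p ^ e * f (p ^ e) + (h + 1) * (p ^ e * E) := by ring
      _ ≤ h * p ^ e * f (p ^ e) + (h + 1) * (C * t ^ d * (p ^ e) ^ d) := by gcongr
      _ = _ := by ring

lemma span_qpow {R : Type u} [CommRing R] (p : ℕ) (hp : p.Prime) [CharP R p] {n : ℕ} (g : Fin n → R) (e : ℕ) :
    Ideal.span ((fun a => a ^ p ^ e) '' (Ideal.span (Set.range g) : Set R)) =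
      Ideal.span (Set.range fun i => g i ^ p ^ e) := by
  have : Fact p.Prime := ⟨hp⟩
  have : ExpChar R p := ExpChar.prime hp
  refine le_antisymm ?_ ?_
  · rw [Ideal.span_le]
    rintro _ ⟨a, ha, rfl⟩
    have h1 : iterateFrobenius R p e a ∈ (Ideal.span (Set.range g)).map (iterateFrobenius R p e) :=
      Ideal.mem_map_of_mem _ ha
    rw [Ideal.map_span, ← Set.range_comp] at h1
    exact h1
  · refine Ideal.span_mono ?_
    rintro _ ⟨i, rfl⟩
    exact ⟨g i, Ideal.subset_span ⟨i, rfl⟩, rfl⟩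

abbrev GenForcing {R : Type u} [CommRing R] {n : ℕ} (g : Fin n → R) (u : R) : Type u :=
  MvPolynomial (Fin n) R ⧸ Ideal.span {MvPolynomial.C u -
            ∑ l : Fin n, MvPolynomial.X l * MvPolynomial.C (g l)}

lemma claimA {R : Type u} [CommRing R] [IsNoetherianRing R] [IsLocalRing R] [IsDomain R]
    (p : ℕ) (hp : p.Prime) [CharP R p] {d : ℕ} (hd : ringKrullDim R = d) {n : ℕ} (g : Fin n → R) (u : R)
    (hu : MemTightClosure R p (Ideal.span (Set.range g)) u) (x : Fin d → R)
    (hx : (Ideal.span (Set.range x)).radical = maximalIdeal R) :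
    IsQSequence (fun i => algebraMap R (GenForcing g u) (x i)) := by
  have : Fact p.Prime := ⟨hp⟩
  have : ExpChar R p := ExpChar.prime hp
  obtain ⟨c, hc, hcu⟩ := hu
  have hc0 : c ≠ 0 := by
    rintro rfl
    exact hc ⊥ (by rw [IsDomain.minimalPrimes_eq_singleton_bot]; rfl) (Ideal.zero_mem _)
  have hr : ∀ e, ∃ r : Fin n → R, ∑ l, r l * g l ^ p ^ e = c * u ^ p ^ e := by
    intro e
    have := hcu e
    rw [span_qpow p hp] at this
    exact Ideal.mem_span_range_iff_exists_fun.1 this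
  choose r hr using hr
  let K := FractionRing R
  have hcK : algebraMap R K c ≠ 0 := fun h => hc0 ((IsFractionRing.injective R K) (by rw [h, map_zero]))
  let ev0 : ℕ → MvPolynomial (Fin n) R →+* K := fun e =>
    MvPolynomial.eval₂Hom ((algebraMap R K).comp (iterateFrobenius R p e))
      (fun l => algebraMap R K (r e l) / algebraMap R K c)
  have hker : ∀ e, ev0 e (MvPolynomial.C u - ∑ l : Fin n, MvPolynomial.X l * MvPolynomial.C (g l)) = 0 := by
    intro e
    have h1 := congrArg (algebraMap R K) (hr e)
    simp only [map_sum, map_mul, map_pow] at h1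
    simp only [ev0, map_sub, map_sum, map_mul, MvPolynomial.coe_eval₂Hom, MvPolynomial.eval₂_C, MvPolynomial.eval₂_X,
      RingHom.comp_apply, iterateFrobenius_def, map_pow]
    rw [sub_eq_zero]
    rw [eq_comm]
    apply mul_left_cancel₀ hcK
    rw [← h1, Finset.mul_sum]
    refine Finset.sum_congr rfl fun l _ => ?_
    have := mul_div_cancel_left₀ (algebraMap R K (r e l)) hcK
    rw [← mul_assoc, ← mul_div_assoc, this]
  let ev : ℕ → GenForcing g u →+* K := fun e => Ideal.Quotient.lift _ (ev0 e) (by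
    intro a ha
    obtain ⟨b, rfl⟩ := Ideal.mem_span_singleton.1 ha
    rw [map_mul, hker, zero_mul])
  refine core_claimA (K := K) p hp.two_le c hc0 ev ?_ ?_ hd x hx
  · intro e a
    have : algebraMap R (GenForcing g u) a = Ideal.Quotient.mk _ (MvPolynomial.C a) := rfl
    rw [this, Ideal.Quotient.lift_mk]
    simp [ev0, iterateFrobenius_def]
  · intro s
    obtain ⟨F, rfl⟩ := Ideal.Quotient.mk_surjective s
    suffices h : ∃ N : ℕ, ∀ e, ∃ r : R, algebraMap R K r = algebraMap R K (c ^ N) * ev0 e F from h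
    induction F using MvPolynomial.induction_on with
    | C a =>
      refine ⟨0, fun e => ⟨a ^ p ^ e, ?_⟩⟩
      simp [ev0, iterateFrobenius_def]
    | add a b ha hb =>
      obtain ⟨Na, ha⟩ := ha
      obtain ⟨Nb, hb⟩ := hb
      refine ⟨Na + Nb, fun e => ?_⟩
      obtain ⟨ra, ha⟩ := ha e
      obtain ⟨rb, hb⟩ := hb e
      refine ⟨c ^ Nb * ra + c ^ Na * rb, ?_⟩
      simp only [map_add, map_mul, ha, hb, pow_add]
      ring
    | mul_X a i ha =>
      obtain ⟨Na, ha⟩ := ha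
      refine ⟨Na + 1, fun e => ?_⟩
      obtain ⟨ra, ha⟩ := ha e
      refine ⟨ra * r e i, ?_⟩
      have hX : ev0 e (MvPolynomial.X i) = algebraMap R K (r e i) / algebraMap R K c := by
        simp [ev0]
      rw [map_mul, map_mul, ha, hX, pow_succ, map_mul]
      have := mul_div_cancel_left₀ (algebraMap R K (r e i)) hcK
      rw [← mul_div_assoc] at *
      nth_rewrite 1 [← this]
      ring
end RobustAux

namespace RobustAux
open IsLocalRing

lemma inj_factor {R : Type u} [CommRing R] {E : Type u} [AddCommGroup E] [Module R E]
    (hE : Module.Injective R E) {X Y : Type u} [AddCommGroup X] [Module R X] [AddCommGroup Y] [Module R Y]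
    (f : X →ₗ[R] Y) (g : X →ₗ[R] E) (h : ∀ x, f x = 0 → g x = 0) :
    ∃ l : Y →ₗ[R] E, ∀ x, l (f x) = g x := by
  have h' : LinearMap.ker f ≤ LinearMap.ker g := fun x hx => h x hx
  obtain ⟨l, hl⟩ := hE.out ((LinearMap.ker f).liftQ f le_rfl) (by
    rw [← LinearMap.ker_eq_bot]
    exact Submodule.ker_liftQ_eq_bot _ _ _ le_rfl) ((LinearMap.ker f).liftQ g h')
  exact ⟨l, fun x => by simpa using hl (Submodule.Quotient.mk x)⟩

lemma exists_max_disjoint {R : Type u} [CommRing R] {Q : Type u} [AddCommGroup Q] [Module R Q]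
    (A C0 : Submodule R Q) (h : Disjoint A C0) :
    ∃ C, C0 ≤ C ∧ Disjoint A C ∧ ∀ D, C ≤ D → Disjoint A D → D ≤ C := by
  obtain ⟨m, hm, hmax⟩ := zorn_le_nonempty₀ {C : Submodule R Q | Disjoint A C} (by
    intro c hc hchain y hy
    refine ⟨sSup c, ?_, fun z hz => le_sSup hz⟩
    exact (hchain.directedOn.disjoint_sSup_right).2 (fun b hb => hc hb)) C0 h
  exact ⟨m, hm, hmax.1, fun D hD hD' => hmax.2 hD' hD⟩

lemma exists_hull (R : Type u) [CommRing R] [IsLocalRing R] :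
    ∃ (E : Type u) (_ : AddCommGroup E) (_ : Module R E) (e0 : E), Module.Injective R E ∧ e0 ≠ 0 ∧
      (∀ a ∈ maximalIdeal R, a • e0 = 0) ∧
      (∀ v : E, (∀ a ∈ maximalIdeal R, a • v = 0) → v ∈ Submodule.span R {e0}) := by
  obtain ⟨Q, hQ, f, hf⟩ := CategoryTheory.EnoughInjectives.presentation (ModuleCat.of R (R ⧸ maximalIdeal R))
  have hQi : Module.Injective R Q := Module.injective_module_of_injective_object R Q
  have hfi : Function.Injective f.hom := (ModuleCat.mono_iff_injective f).1 hf
  let q0 : Q := f.hom (Ideal.Quotient.mk (maximalIdeal R) 1)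
  have hq0 : q0 ≠ 0 := by
    intro h
    have : (Ideal.Quotient.mk (maximalIdeal R) 1) = 0 := hfi (h.trans (map_zero f.hom).symm)
    rw [map_one] at this
    exact one_ne_zero this
  have hmq0 : ∀ a ∈ maximalIdeal R, a • q0 = 0 := by
    intro a ha
    have h1 : a • q0 = f.hom (a • Ideal.Quotient.mk (maximalIdeal R) 1) := (map_smul f.hom _ _).symm
    rw [h1]
    have : a • Ideal.Quotient.mk (maximalIdeal R) 1 = 0 := by
      rw [← Ideal.Quotient.mk_eq_mk, ← Submodule.Quotient.mk_smul, smul_eq_mul, mul_one]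
      exact (Submodule.Quotient.mk_eq_zero _).2 ha
    rw [this, map_zero]
  set L : Submodule R Q := Submodule.span R {q0} with hL
  obtain ⟨C, -, hLC, hCmax⟩ := exists_max_disjoint L ⊥ disjoint_bot_right
  obtain ⟨E, hLE, hCE, hEmax⟩ := exists_max_disjoint C L hLC.symm
  have hCmax' : ∀ D, C ≤ D → Disjoint E D → D ≤ C := fun D hD hED =>
    hCmax D hD (hED.mono_left hLE)
  obtain ⟨h, hh⟩ := inj_factor hQi (LinearMap.coprod E.subtype C.subtype)
    (E.subtype ∘ₗ LinearMap.fst R E C) (by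
      rintro ⟨a, b⟩ hab
      have hab' : (a : Q) + b = 0 := by simpa using hab
      have : (a : Q) ∈ C := by
        rw [eq_neg_of_add_eq_zero_left hab']; exact C.neg_mem b.2
      have := Submodule.disjoint_def.1 hCE a this a.2
      simpa using this)
  have hhE : ∀ e ∈ E, h e = e := fun e he => by simpa using hh (⟨e, he⟩, 0)
  have hhC : ∀ e ∈ C, h e = 0 := fun e he => by simpa using hh (0, ⟨e, he⟩)
  have hker : LinearMap.ker h ≤ C := by
    refine hCmax' _ (fun c hc => hhC c hc) ?_
    rw [Submodule.disjoint_def]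
    intro v hv hv'
    rw [← hhE v hv]; exact hv'
  have hrange : LinearMap.range h ≤ E := by
    refine hEmax _ (fun e he => ⟨e, hhE e he⟩) ?_
    rw [Submodule.disjoint_def]
    rintro _ hc ⟨q, rfl⟩
    by_contra hne
    have hq : q ∉ C := fun hq => hne (hhC q hq)
    have hnd : ¬ Disjoint E (C ⊔ Submodule.span R {q}) := fun hd =>
      hq (hCmax' _ le_sup_left hd (Submodule.mem_sup_right (Submodule.mem_span_singleton_self q)))
    rw [Submodule.disjoint_def] at hnd
    push Not at hnd
    obtain ⟨e, heE, he, hne0⟩ := hnd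
    obtain ⟨c, hcC, b, hb, rfl⟩ := Submodule.mem_sup.1 he
    obtain ⟨r, rfl⟩ := Submodule.mem_span_singleton.1 hb
    have h1 := hhE _ heE
    rw [map_add, hhC c hcC, zero_add, map_smul] at h1
    apply hne0
    refine Submodule.disjoint_def.1 hCE _ ?_ heE
    rw [← h1]
    exact C.smul_mem _ hc
  have hq0E : q0 ∈ E := hLE (Submodule.mem_span_singleton_self q0)
  refine ⟨E, inferInstance, inferInstance, ⟨q0, hq0E⟩, ⟨?_⟩, ?_, ?_, ?_⟩
  · intro X Y _ _ _ _ i hi g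
    obtain ⟨l, hl⟩ := hQi.out i hi (E.subtype ∘ₗ g)
    refine ⟨(h.codRestrict E (fun q => hrange ⟨q, rfl⟩)) ∘ₗ l, fun x => ?_⟩
    ext
    simp only [LinearMap.comp_apply, LinearMap.codRestrict_apply, hl]
    exact hhE _ (g x).2
  · intro h
    exact hq0 (congrArg Subtype.val h)
  · intro a ha
    ext
    exact hmq0 a ha
  · rintro ⟨v, hv⟩ hmv
    have hmv' : ∀ a ∈ maximalIdeal R, a • v = 0 := fun a ha => congrArg Subtype.val (hmv a ha)
    by_cases hv0 : v = 0
    · have : (⟨v, hv⟩ : E) = 0 := Subtype.ext hv0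
      rw [this]; exact Submodule.zero_mem _
    have hvC : v ∉ C := fun hvC => hv0 (Submodule.disjoint_def.1 hCE v hvC hv)
    have hnd : ¬ Disjoint L (C ⊔ Submodule.span R {v}) := fun hd =>
      hvC (hCmax _ le_sup_left hd (Submodule.mem_sup_right (Submodule.mem_span_singleton_self v)))
    rw [Submodule.disjoint_def] at hnd
    push Not at hnd
    obtain ⟨e, heL, he, hne0⟩ := hnd
    obtain ⟨c, hcC, b, hb, rfl⟩ := Submodule.mem_sup.1 he
    obtain ⟨r, rfl⟩ := Submodule.mem_span_singleton.1 hb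
    have hc0 : c = 0 := by
      refine Submodule.disjoint_def.1 hCE c hcC ?_
      have : c = (c + r • v) - r • v := by abel
      rw [this]
      exact E.sub_mem (hLE heL) (E.smul_mem _ hv)
    rw [hc0, zero_add] at heL hne0
    have hr : IsUnit r := by
      by_contra hr
      exact hne0 (hmv' r hr)
    obtain ⟨s, hs⟩ := Submodule.mem_span_singleton.1 heL
    obtain ⟨w, rfl⟩ := hr
    refine Submodule.mem_span_singleton.2 ⟨(↑w⁻¹ : R) * s, ?_⟩
    ext
    simp only [Submodule.coe_smul, mul_smul]
    rw [hs, smul_smul, Units.inv_mul, one_smul]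

def annP {R : Type u} [CommRing R] (E : Type u) [AddCommGroup E] [Module R E] (I : Ideal R) : Submodule R E where
  carrier := {v | ∀ a ∈ I, a • v = 0}
  add_mem' := fun {a b} ha hb r hr => by rw [smul_add, ha r hr, hb r hr, add_zero]
  zero_mem' := fun r _ => smul_zero r
  smul_mem' := fun c v hv r hr => by rw [smul_comm, hv r hr, smul_zero]

lemma mem_annP {R : Type u} [CommRing R] {E : Type u} [AddCommGroup E] [Module R E] {I : Ideal R} {v : E} :
    v ∈ annP E I ↔ ∀ a ∈ I, a • v = 0 := Iff.rfl

lemma noeth_annP {R : Type u} [CommRing R] [IsNoetherianRing R] [IsLocalRing R]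
    {E : Type u} [AddCommGroup E] [Module R E] (e0 : E)
    (hsoc : ∀ v : E, (∀ a ∈ maximalIdeal R, a • v = 0) → v ∈ Submodule.span R {e0}) (n : ℕ) :
    IsNoetherian R (annP E (maximalIdeal R ^ n)) := by
  induction n with
  | zero =>
    have : annP E (maximalIdeal R ^ 0) = ⊥ := by
      rw [eq_bot_iff]
      intro v hv
      have := hv 1 (by simp)
      simpa using this
    rw [this]
    infer_instance
  | succ n ih =>
    obtain ⟨r, y, hy⟩ := Submodule.fg_iff_exists_fin_generating_family.1
      (Ideal.fg_of_isNoetherianRing (maximalIdeal R))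
    have hym : ∀ i, y i ∈ maximalIdeal R := fun i => hy ▸ Submodule.subset_span ⟨i, rfl⟩
    let φ : annP E (maximalIdeal R ^ (n + 1)) →ₗ[R] (Fin r → annP E (maximalIdeal R ^ n)) :=
      LinearMap.pi fun i => LinearMap.codRestrict _
        ((LinearMap.lsmul R E (y i)) ∘ₗ Submodule.subtype _) (by
          intro v a ha
          simp only [LinearMap.comp_apply, Submodule.subtype_apply, LinearMap.lsmul_apply, smul_smul]
          refine v.2 _ ?_
          rw [pow_succ]
          exact Ideal.mul_mem_mul ha (hym i))
    have hN : IsNoetherian R (Submodule.span R {e0}) := isNoetherian_span_of_finite R (Set.finite_singleton e0)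
    have hker : ∀ v, φ v = 0 → (v : E) ∈ Submodule.span R {e0} := by
      intro v hv
      refine hsoc _ fun a ha => ?_
      rw [← hy] at ha
      induction ha using Submodule.span_induction with
      | mem a ha =>
        obtain ⟨i, rfl⟩ := ha
        exact congrArg Subtype.val (congrFun hv i)
      | zero => exact zero_smul _ _
      | add a b _ _ ha hb => rw [add_smul, ha, hb, add_zero]
      | smul a b _ hb => rw [smul_assoc, hb, smul_zero]
    have hNk : IsNoetherian R (LinearMap.ker φ) := by
      let j : LinearMap.ker φ →ₗ[R] Submodule.span R {e0} :=
        LinearMap.codRestrict _ (Submodule.subtype _ ∘ₗ Submodule.subtype _) (fun v => hker v.1 v.2)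
      refine isNoetherian_of_injective j ?_
      intro a b hab
      have h1 : ((j a : Submodule.span R {e0}) : E) = j b := by rw [hab]
      exact Subtype.ext (Subtype.ext h1)
    exact isNoetherian_of_range_eq_ker (LinearMap.ker φ).subtype φ (by simp)

end RobustAux

namespace RobustAux
open IsLocalRing

section HH
variable {R : Type u} [CommRing R] {M : Type u} [AddCommGroup M] [Module R M]

def AA (N0 : Submodule R M) {d : ℕ} (x : Fin d → R) (t : ℕ) : Submodule R M :=
  N0 ⊔ pw x (t + 1) • (⊤ : Submodule R M)

lemma pi_mul_pw {d : ℕ} (x : Fin d → R) (t k : ℕ) {r : R} (hr : r ∈ pw x t) :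
    (∏ i, x i) ^ k * r ∈ pw x (t + k) := by
  unfold pw at hr
  induction hr using Submodule.span_induction with
  | mem r hr =>
    obtain ⟨i, rfl⟩ := hr
    obtain ⟨z, hz⟩ := Finset.dvd_prod_of_mem x (Finset.mem_univ i)
    have : (∏ i, x i) ^ k * x i ^ t = z ^ k * x i ^ (t + k) := by
      rw [hz, pow_add, mul_pow]; ring
    simp only
    rw [this]
    exact Ideal.mul_mem_left _ _ (pw_mem _ _ _)
  | zero => simp
  | add a b _ _ ha hb => rw [mul_add]; exact add_mem ha hb
  | smul a b _ hb =>
    have : (∏ i, x i) ^ k * (a • b) = a * ((∏ i, x i) ^ k * b) := by rw [smul_eq_mul]; ring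
    rw [this]; exact Ideal.mul_mem_left _ _ hb

lemma AA_step (N0 : Submodule R M) {d : ℕ} (x : Fin d → R) (i j : ℕ) (h : i ≤ j) {m : M} (hm : m ∈ AA N0 x i) :
    (∏ i, x i) ^ (j - i) • m ∈ AA N0 x j := by
  obtain ⟨k, rfl⟩ := Nat.exists_eq_add_of_le h
  rw [Nat.add_sub_cancel_left]
  obtain ⟨a, ha, b, hb, rfl⟩ := Submodule.mem_sup.1 hm
  rw [smul_add]
  refine Submodule.add_mem_sup (N0.smul_mem _ ha) ?_
  clear hm
  induction hb using Submodule.smul_induction_on' with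
  | smul r hr m hm =>
    rw [smul_smul]
    refine Submodule.smul_mem_smul ?_ trivial
    have := pi_mul_pw x (i + 1) k hr
    rwa [show i + 1 + k = i + k + 1 by ring] at this
  | add a _ b _ ha hb => rw [smul_add]; exact add_mem ha hb

noncomputable def Hmap (N0 : Submodule R M) {d : ℕ} (x : Fin d → R) (i j : ℕ) (h : i ≤ j) :
    (M ⧸ AA N0 x i) →ₗ[R] (M ⧸ AA N0 x j) :=
  Submodule.mapQ _ _ (LinearMap.lsmul R M ((∏ i, x i) ^ (j - i))) (fun _ hm => AA_step N0 x i j h hm)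

lemma Hmap_mk (N0 : Submodule R M) {d : ℕ} (x : Fin d → R) (i j : ℕ) (h : i ≤ j) (m : M) :
    Hmap N0 x i j h (Submodule.Quotient.mk m) = Submodule.Quotient.mk ((∏ i, x i) ^ (j - i) • m) := rfl

instance Hsys (N0 : Submodule R M) {d : ℕ} (x : Fin d → R) :
    DirectedSystem (fun t => M ⧸ AA N0 x t) (fun i j h => Hmap N0 x i j h) where
  map_self := by
    intro i m
    obtain ⟨m, rfl⟩ := Submodule.Quotient.mk_surjective _ m
    rw [Hmap_mk]; simp
  map_map := by
    intro k j i hij hjk m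
    obtain ⟨m, rfl⟩ := Submodule.Quotient.mk_surjective _ m
    rw [Hmap_mk, Hmap_mk, Hmap_mk, smul_smul, ← pow_add]
    congr 3
    omega

abbrev HH (N0 : Submodule R M) {d : ℕ} (x : Fin d → R) : Type u :=
  Module.DirectLimit (fun t => M ⧸ AA N0 x t) (fun i j h => Hmap N0 x i j h)

noncomputable def eta (N0 : Submodule R M) {d : ℕ} (x : Fin d → R) (t : ℕ) : M →ₗ[R] HH N0 x :=
  Module.DirectLimit.of R ℕ (fun t => M ⧸ AA N0 x t) (fun i j h => Hmap N0 x i j h) t ∘ₗ (AA N0 x t).mkQ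

variable {N0 : Submodule R M} {d : ℕ} {x : Fin d → R}

lemma eta_surj (h : HH N0 x) : ∃ t m, eta N0 x t m = h := by
  obtain ⟨t, m, rfl⟩ := Module.DirectLimit.exists_of h
  obtain ⟨m, rfl⟩ := Submodule.Quotient.mk_surjective _ m
  exact ⟨t, m, rfl⟩

lemma eta_pi (t k : ℕ) (m : M) : eta N0 x (t + k) ((∏ i, x i) ^ k • m) = eta N0 x t m := by
  have := Module.DirectLimit.of_f (R := R) (ι := ℕ) (G := fun t => M ⧸ AA N0 x t) (f := fun i j h => Hmap N0 x i j h)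
    (i := t) (j := t + k) (hij := Nat.le_add_right t k) (x := Submodule.Quotient.mk m)
  rw [Hmap_mk, Nat.add_sub_cancel_left] at this
  exact this

lemma eta_zero {t : ℕ} {m : M} (h : eta N0 x t m = 0) : ∃ k, (∏ i, x i) ^ k • m ∈ AA N0 x (t + k) := by
  obtain ⟨j, hj, h'⟩ := Module.DirectLimit.of.zero_exact h
  obtain ⟨k, rfl⟩ := Nat.exists_eq_add_of_le hj
  refine ⟨k, ?_⟩
  rw [Submodule.mkQ_apply, Hmap_mk, Nat.add_sub_cancel_left] at h'
  exact (Submodule.Quotient.mk_eq_zero _).1 h'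

lemma eta_of_mem {t : ℕ} {m : M} (h : m ∈ AA N0 x t) : eta N0 x t m = 0 := by
  unfold eta
  rw [LinearMap.comp_apply, Submodule.mkQ_apply, (Submodule.Quotient.mk_eq_zero _).2 h, map_zero]

lemma eta_lift {P : Type u} [AddCommGroup P] [Module R P] (g : ℕ → M →ₗ[R] P)
    (h1 : ∀ t, ∀ m ∈ AA N0 x t, g t m = 0) (h2 : ∀ t m, g (t + 1) ((∏ i, x i) • m) = g t m) :
    ∃ G : HH N0 x →ₗ[R] P, ∀ t m, G (eta N0 x t m) = g t m := by
  have h3 : ∀ t k m, g (t + k) ((∏ i, x i) ^ k • m) = g t m := by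
    intro t k
    induction k with
    | zero => intro m; simp
    | succ k ih => intro m; rw [pow_succ', mul_smul, ← add_assoc, h2, ih]
  have h1' : ∀ t, AA N0 x t ≤ LinearMap.ker (g t) := fun t m hm => LinearMap.mem_ker.2 (h1 t m hm)
  refine ⟨Module.DirectLimit.lift R ℕ _ _ (fun t => (AA N0 x t).liftQ (g t) (h1' t)) ?_, fun t m => ?_⟩
  · intro i j h m
    obtain ⟨m, rfl⟩ := Submodule.Quotient.mk_surjective _ m
    obtain ⟨k, rfl⟩ := Nat.exists_eq_add_of_le h
    rw [Hmap_mk, Nat.add_sub_cancel_left, Submodule.liftQ_apply, Submodule.liftQ_apply, h3]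
  · unfold eta
    rw [LinearMap.comp_apply, Module.DirectLimit.lift_of]
    simp

lemma eta_ext {P : Type u} [AddCommGroup P] [Module R P] {f g : HH N0 x →ₗ[R] P}
    (h : ∀ t m, f (eta N0 x t m) = g (eta N0 x t m)) : f = g := by
  refine LinearMap.ext fun z => ?_
  obtain ⟨t, m, rfl⟩ := eta_surj z
  exact h t m

end HH

lemma AA_ideal {R : Type u} [CommRing R] (N0 : Ideal R) {d : ℕ} (x : Fin d → R) (t : ℕ) :
    AA N0 x t = N0 ⊔ pw x (t + 1) := by
  unfold AA
  rw [smul_eq_mul, Ideal.mul_top]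

lemma pw_succ {R : Type u} [CommRing R] {d : ℕ} (x : Fin (d + 1) → R) (t : ℕ) :
    pw x t = Ideal.span {x 0 ^ t} ⊔ pw (fun i => x i.succ) t := by
  unfold pw
  rw [span_range_succ]

/-- `ann_H(y)` is a quotient of `H'`. -/
lemma beta_exists {R : Type u} [CommRing R] (N0 : Ideal R) {d : ℕ} (x : Fin (d + 1) → R) :
    ∃ β : HH (N0 ⊔ Ideal.span {x 0}) (fun i : Fin d => x i.succ) →ₗ[R] HH N0 x,
      ∀ h : HH N0 x, x 0 • h = 0 → ∃ h', β h' = h := by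
  obtain ⟨β, hβ⟩ := eta_lift (N0 := N0 ⊔ Ideal.span {x 0}) (x := fun i : Fin d => x i.succ)
    (fun t => eta N0 x t ∘ₗ LinearMap.lsmul R R (x 0 ^ t)) (by
      intro t m hm
      refine eta_of_mem ?_
      rw [AA_ideal] at hm ⊢
      rw [pw_succ]
      simp only [LinearMap.lsmul_apply, smul_eq_mul]
      obtain ⟨a, ha, b, hb, rfl⟩ := Submodule.mem_sup.1 hm
      obtain ⟨a, ha', c, hc, rfl⟩ := Submodule.mem_sup.1 ha
      obtain ⟨c, rfl⟩ := Ideal.mem_span_singleton.1 hc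
      rw [mul_add, mul_add, add_assoc]
      refine Submodule.add_mem_sup (N0.mul_mem_left _ ha') (Submodule.add_mem_sup ?_ (Ideal.mul_mem_left _ _ hb))
      exact Ideal.mem_span_singleton.2 ⟨c, by ring⟩) (by
      intro t m
      simp only [LinearMap.comp_apply, LinearMap.lsmul_apply]
      rw [← eta_pi t 1, pow_one, Fin.prod_univ_succ]
      congr 1
      simp only [smul_eq_mul]
      ring)
  refine ⟨β, fun h hh => ?_⟩
  obtain ⟨t, b, rfl⟩ := eta_surj h
  rw [← map_smul] at hh
  obtain ⟨k, hk⟩ := eta_zero hh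
  rw [AA_ideal, pw_succ] at hk
  obtain ⟨n, hn, w, hw, hnw⟩ := Submodule.mem_sup.1 hk
  obtain ⟨a, ha, w, hw', rfl⟩ := Submodule.mem_sup.1 hw
  obtain ⟨a, rfl⟩ := Ideal.mem_span_singleton.1 ha
  refine ⟨eta _ _ (t + k) a, ?_⟩
  rw [hβ, ← eta_pi (N0 := N0) (x := x) t k b, LinearMap.comp_apply, eq_comm, ← sub_eq_zero, ← map_sub, ← eta_pi _ 1]
  refine eta_of_mem ?_
  rw [AA_ideal, pw_succ, pow_one, Fin.prod_univ_succ]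
  have hpi := pi_mul_pw (fun i : Fin d => x i.succ) (t + k + 1) 1 hw'
  rw [pow_one] at hpi
  have : (x 0 * ∏ i : Fin d, x i.succ) • ((∏ i, x i) ^ k • b - (LinearMap.lsmul R R (x 0 ^ (t + k))) a)
      = (∏ i : Fin d, x i.succ) * n + (∏ i : Fin d, x i.succ) * w := by
    simp only [smul_eq_mul, LinearMap.lsmul_apply] at hnw ⊢
    have : (∏ i : Fin d, x i.succ) * n + (∏ i : Fin d, x i.succ) * w =
      (∏ i : Fin d, x i.succ) * ((n + (x 0 ^ (t + k + 1) * a + w)) - x 0 ^ (t + k + 1) * a) := by ring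
    rw [this, hnw]
    ring
  rw [Fin.prod_univ_succ] at this
  rw [this]
  exact Submodule.add_mem_sup (N0.mul_mem_left _ hn) (Submodule.mem_sup_right hpi)

end RobustAux

namespace RobustAux
open IsLocalRing

lemma exists_limit {R : Type u} [CommRing R] (m : Ideal R) [IsAdicComplete m R] (f : ℕ → R)
    (hf : ∀ n, f (n + 1) - f n ∈ m ^ n) : ∃ L, ∀ n, L - f n ∈ m ^ n := by
  have h1 : ∀ n k, f (n + k) - f n ∈ m ^ n := by
    intro n k
    induction k with
    | zero => simp
    | succ k ih =>
      have : f (n + (k + 1)) - f n = (f (n + k + 1) - f (n + k)) + (f (n + k) - f n) := by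
        rw [← add_assoc]; ring
      rw [this]
      exact add_mem (Ideal.pow_le_pow_right (Nat.le_add_right n k) (hf (n + k))) ih
  obtain ⟨L, hL⟩ := IsPrecomplete.prec (I := m) (M := R) inferInstance (f := f) (by
    intro a b hab
    obtain ⟨k, rfl⟩ := Nat.exists_eq_add_of_le hab
    rw [SModEq.sub_mem, smul_eq_mul, Ideal.mul_top, ← neg_sub]
    exact neg_mem (h1 a k))
  refine ⟨L, fun n => ?_⟩
  have := hL n
  rw [SModEq.sub_mem, smul_eq_mul, Ideal.mul_top] at this
  rw [← neg_sub]
  exact neg_mem this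

lemma nak {R : Type u} [CommRing R] (m : Ideal R) [IsAdicComplete m R]
    {H E : Type u} [AddCommGroup H] [Module R H] [AddCommGroup E] [Module R E]
    (hH : ∀ h : H, ∃ n, ∀ a ∈ m ^ n, a • h = 0) {y : R} (hy : y ∈ m) {r : ℕ} (g : Fin r → (H →ₗ[R] E))
    (hg : ∀ l : H →ₗ[R] E, ∃ (a : Fin r → R) (μ : H →ₗ[R] E), l = ∑ i, a i • g i + y • μ) :
    Module.Finite R (H →ₗ[R] E) := by
  choose A B hAB using hg
  refine ⟨Submodule.fg_iff_exists_fin_generating_family.2 ⟨r, g, ?_⟩⟩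
  rw [eq_top_iff]
  intro l _
  let μ : ℕ → (H →ₗ[R] E) := fun n => B^[n] l
  have hμ : ∀ n, μ n = ∑ i, A (μ n) i • g i + y • μ (n + 1) := by
    intro n
    have : μ (n + 1) = B (μ n) := Function.iterate_succ_apply' B n l
    rw [this]
    exact hAB (μ n)
  let f : Fin r → ℕ → R := fun i n => ∑ k ∈ Finset.range n, y ^ k * A (μ k) i
  have hl : ∀ n, l = ∑ i, f i n • g i + y ^ n • μ n := by
    intro n
    induction n with
    | zero => simp [f, μ]
    | succ n ih =>
      rw [hμ n] at ih
      rw [ih]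
      simp only [f, Finset.sum_range_succ, add_smul, Finset.sum_add_distrib, smul_add, Finset.smul_sum, smul_smul,
        pow_succ]
      abel
  have hlim : ∀ i, ∃ L, ∀ n, L - f i n ∈ m ^ n := by
    intro i
    refine exists_limit m (f i) fun n => ?_
    simp only [f, Finset.sum_range_succ, add_sub_cancel_left]
    exact Ideal.mul_mem_right _ _ (Ideal.pow_mem_pow hy n)
  choose L hL using hlim
  have : l = ∑ i, L i • g i := by
    refine LinearMap.ext fun h => ?_
    obtain ⟨n, hn⟩ := hH h
    conv_lhs => rw [hl n]
    have h1 : (y ^ n • μ n) h = 0 := by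
      rw [LinearMap.smul_apply, ← map_smul, hn _ (Ideal.pow_mem_pow hy n), map_zero]
    rw [LinearMap.add_apply, h1, add_zero, LinearMap.sum_apply, LinearMap.sum_apply]
    refine Finset.sum_congr rfl fun i _ => ?_
    rw [LinearMap.smul_apply, LinearMap.smul_apply, eq_comm, ← sub_eq_zero, ← sub_smul, ← map_smul,
      hn _ (hL i n), map_zero]
  rw [this]
  exact Submodule.sum_mem _ fun i _ => Submodule.smul_mem _ _ (Submodule.subset_span ⟨i, rfl⟩)

lemma finite_dual {R : Type u} [CommRing R] [IsNoetherianRing R] [IsLocalRing R]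
    [IsAdicComplete (maximalIdeal R) R]
    {E : Type u} [AddCommGroup E] [Module R E] (hE : Module.Injective R E)
    (hN : ∀ n, IsNoetherian R (annP E (maximalIdeal R ^ n))) (d : ℕ) :
    ∀ (N0 : Ideal R) (x : Fin d → R), (∀ i, x i ∈ maximalIdeal R) →
      ∀ k, maximalIdeal R ^ k ≤ N0 ⊔ Ideal.span (Set.range x) → Module.Finite R (HH N0 x →ₗ[R] E) := by
  induction d with
  | zero =>
    intro N0 x _ k hk
    have hspan : ∀ t, pw x t = ⊥ := fun t => by unfold pw; simp
    have hk' : maximalIdeal R ^ k ≤ N0 := by simpa using hk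
    have := hN k
    let ev : (HH N0 x →ₗ[R] E) →ₗ[R] annP E (maximalIdeal R ^ k) :=
      LinearMap.codRestrict _ (LinearMap.applyₗ (eta N0 x 0 1)) (by
        intro l a ha
        rw [LinearMap.applyₗ_apply_apply, ← map_smul, ← map_smul]
        have : eta N0 x 0 (a • 1) = 0 := by
          refine eta_of_mem ?_
          rw [AA_ideal]
          refine Submodule.mem_sup_left ?_
          simpa using hk' ha
        rw [this, map_zero])
    refine Module.Finite.of_injective ev ?_
    rw [← LinearMap.ker_eq_bot, eq_bot_iff]
    intro l hl
    have h0 : l (eta N0 x 0 1) = 0 := congrArg Subtype.val hl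
    refine (Submodule.mem_bot R).2 (eta_ext fun t m => ?_)
    have h1 := eta_pi (N0 := N0) (x := x) 0 t m
    simp only [Finset.univ_eq_empty, Finset.prod_empty, one_pow, one_smul, zero_add] at h1
    have h2 : m = m • (1 : R) := by simp
    rw [h1, h2, map_smul, map_smul, h0, smul_zero]
    rfl
  | succ d ih =>
    intro N0 x hx k hk
    have hfin := ih (N0 ⊔ Ideal.span {x 0}) (fun i => x i.succ) (fun i => hx _) k (by
      rwa [span_range_succ, ← sup_assoc] at hk)
    obtain ⟨β, hβ⟩ := beta_exists N0 x
    let ρ : (HH N0 x →ₗ[R] E) →ₗ[R] (HH (N0 ⊔ Ideal.span {x 0}) (fun i : Fin d => x i.succ) →ₗ[R] E) :=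
      LinearMap.lcomp R E β
    have hker : ∀ l, ρ l = 0 → ∃ μ, l = x 0 • μ := by
      intro l hl
      obtain ⟨μ, hμ⟩ := inj_factor hE (LinearMap.lsmul R (HH N0 x) (x 0)) l (by
        intro h hh
        obtain ⟨h', rfl⟩ := hβ h hh
        exact LinearMap.congr_fun hl h')
      refine ⟨μ, LinearMap.ext fun h => ?_⟩
      rw [← hμ h]
      simp
    have hrange : Module.Finite R (LinearMap.range ρ) := inferInstance
    obtain ⟨r, s, hs⟩ := Module.Finite.exists_fin (R := R) (M := LinearMap.range ρ)
    choose g hg using fun i => (s i).2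
    refine nak (maximalIdeal R) ?_ (hx 0) g ?_
    · intro h
      obtain ⟨t, b, rfl⟩ := eta_surj h
      obtain ⟨k', hk'⟩ : ∃ k', maximalIdeal R ^ k' ≤ N0 ⊔ pw x (t + 1) := by
        refine ⟨k * (1 + ((d + 1) * (t + 1) + 1)), ?_⟩
        rw [pow_mul]
        refine (Ideal.pow_right_mono hk _).trans (Ideal.sup_pow_add_le_pow_sup_pow.trans ?_)
        rw [pow_one]
        exact sup_le_sup_left (span_pow_le_pw x (t + 1) (Nat.succ_pos t)) _
      refine ⟨k', fun a ha => ?_⟩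
      rw [← map_smul]
      refine eta_of_mem ?_
      rw [AA_ideal, smul_eq_mul]
      exact Ideal.mul_mem_right _ _ (hk' ha)
    · intro l
      have h1 : (⟨ρ l, ⟨l, rfl⟩⟩ : LinearMap.range ρ) ∈ Submodule.span R (Set.range s) := by rw [hs]; trivial
      obtain ⟨a, ha⟩ := (Submodule.mem_span_range_iff_exists_fun R).1 h1
      obtain ⟨μ, hμ⟩ := hker (l - ∑ i, a i • g i) (by
        rw [map_sub, map_sum, sub_eq_zero]
        have h2 := congrArg Subtype.val ha
        simp only [Submodule.coe_sum, Submodule.coe_smul] at h2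
        rw [← h2]
        refine Finset.sum_congr rfl fun i _ => ?_
        rw [map_smul, hg])
      exact ⟨a, μ, by rw [← hμ]; abel⟩

end RobustAux

namespace RobustAux
open IsLocalRing

/-- `x_i ^ (a_i)` -/
def pwa {R : Type u} [CommRing R] {d : ℕ} (y : Fin d → R) (a : Fin d → ℕ) : Ideal R :=
  Ideal.span (Set.range fun i => y i ^ a i)

lemma pwa_mem {R : Type u} [CommRing R] {d : ℕ} (y : Fin d → R) (a : Fin d → ℕ) (i : Fin d) (n : ℕ) (h : a i ≤ n) :
    y i ^ n ∈ pwa y a := (pwa y a).pow_mem_of_pow_mem (Ideal.subset_span ⟨i, rfl⟩) h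

lemma mul_mem_sup {R : Type u} [CommRing R] {d : ℕ} {y : Fin d → R} {a : Fin d → ℕ} {C J : Ideal R} {z : R}
    (h : ∀ i, z * y i ^ a i ∈ C ⊔ J) {r : R} (hr : r ∈ C ⊔ pwa y a) : z * r ∈ C ⊔ J := by
  have : C ⊔ pwa y a ≤ col (C ⊔ J) z := by
    refine sup_le (le_sup_left.trans (le_col _ _)) (Ideal.span_le.2 ?_)
    rintro _ ⟨i, rfl⟩
    exact h i
  exact this hr

lemma pi_step {R : Type u} [CommRing R] {d : ℕ} {y : Fin d → R} {a : Fin d → ℕ} {C : Ideal R} {r : R} (s t : ℕ)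
    (hr : r * (∏ i, y i) ^ s ∈ C ⊔ pwa y (fun i => a i + s)) :
    r * (∏ i, y i) ^ (s + t) ∈ C ⊔ pwa y (fun i => a i + (s + t)) := by
  have := mul_mem_sup (z := (∏ i, y i) ^ t) (J := pwa y (fun i => a i + (s + t))) (C := C) (fun i => ?_) hr
  · rw [pow_add, ← mul_assoc, mul_comm]; exact this
  · refine Submodule.mem_sup_right ?_
    rw [← Finset.mul_prod_erase Finset.univ y (Finset.mem_univ i), mul_pow]
    have e : (y i ^ t * (∏ x ∈ Finset.univ.erase i, y x) ^ t) * y i ^ (a i + s) =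
      (∏ x ∈ Finset.univ.erase i, y x) ^ t * y i ^ (a i + (s + t)) := by ring
    rw [e]
    exact Ideal.mul_mem_left _ _ (pwa_mem y _ i _ le_rfl)

/-- limit closure -/
def LL {R : Type u} [CommRing R] {d : ℕ} (C : Ideal R) (y : Fin d → R) (a : Fin d → ℕ) : Ideal R where
  carrier := {r | ∃ s, r * (∏ i, y i) ^ s ∈ C ⊔ pwa y (fun i => a i + s)}
  zero_mem' := ⟨0, by simp⟩
  add_mem' := by
    rintro r r' ⟨s, hs⟩ ⟨t, ht⟩
    refine ⟨s + t, ?_⟩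
    rw [add_mul]
    refine add_mem (pi_step s t hs) ?_
    have := pi_step t s ht
    rwa [add_comm t s] at this
  smul_mem' := by
    rintro b r ⟨s, hs⟩
    refine ⟨s, ?_⟩
    rw [smul_eq_mul, mul_assoc]
    exact Ideal.mul_mem_left _ _ hs

lemma mem_LL {R : Type u} [CommRing R] {d : ℕ} {C : Ideal R} {y : Fin d → R} {a : Fin d → ℕ} {r : R} :
    r ∈ LL C y a ↔ ∃ s, r * (∏ i, y i) ^ s ∈ C ⊔ pwa y (fun i => a i + s) := Iff.rfl

lemma LL_anti {R : Type u} [CommRing R] {d : ℕ} {C : Ideal R} {y : Fin d → R} {a b : Fin d → ℕ}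
    (h : ∀ i, a i ≤ b i) : LL C y b ≤ LL C y a := by
  rintro r ⟨s, hs⟩
  refine ⟨s, (sup_le_sup_left ?_ C : C ⊔ pwa y (fun i => b i + s) ≤ _) hs⟩
  refine Ideal.span_le.2 ?_
  rintro _ ⟨i, rfl⟩
  exact pwa_mem y _ i _ (Nat.add_le_add_right (h i) s)

lemma LL_col {R : Type u} [CommRing R] {d : ℕ} {C : Ideal R} {y : Fin d → R} {a : Fin d → ℕ} (i : Fin d) (n : ℕ) :
    col (LL C y (Function.update a i (n + 1))) (y i) ≤ LL C y (Function.update a i n) := by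
  rintro r ⟨s, hs⟩
  refine ⟨s + 1, ?_⟩
  have := mul_mem_sup (z := ∏ x ∈ Finset.univ.erase i, y x)
    (J := pwa y (fun j => Function.update a i n j + (s + 1))) (C := C) (fun j => ?_) hs
  · have e : r * (∏ i, y i) ^ (s + 1) =
      (∏ x ∈ Finset.univ.erase i, y x) * (y i * r * (∏ i, y i) ^ s) := by
      rw [pow_succ]
      nth_rw 2 [← Finset.mul_prod_erase Finset.univ y (Finset.mem_univ i)]
      ring
    rw [e]; exact this
  · refine Submodule.mem_sup_right ?_
    by_cases hj : j = i
    · subst hj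
      refine Ideal.mul_mem_left _ _ (pwa_mem y _ j _ ?_)
      simp; omega
    · have : y j ∣ ∏ x ∈ Finset.univ.erase i, y x := Finset.dvd_prod_of_mem y (by simp [hj])
      obtain ⟨w, hw⟩ := this
      rw [hw]
      have e : y j * w * y j ^ (Function.update a i (n + 1) j + s) =
        w * y j ^ (Function.update a i (n + 1) j + (s + 1)) := by ring
      rw [e]
      refine Ideal.mul_mem_left _ _ (pwa_mem y _ j _ ?_)
      simp [hj]

lemma len_LL_step {R : Type u} [CommRing R] {d : ℕ} {C : Ideal R} {y : Fin d → R} {a : Fin d → ℕ} (i : Fin d) (n : ℕ) :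
    (n : ℕ∞) * len (LL C y (Function.update a i 1)) ≤ len (LL C y (Function.update a i n)) := by
  induction n with
  | zero => simp
  | succ n ih =>
    rw [len_split (LL C y (Function.update a i (n + 1))) (y i)]
    push_cast
    rw [add_mul, one_mul]
    refine add_le_add (ih.trans (len_anti (LL_col i n))) (len_anti (sup_le ?_ ?_))
    · refine LL_anti fun j => ?_
      by_cases hj : j = i
      · subst hj; simp
      · simp [hj]
    · rw [Ideal.span_singleton_le_iff_mem]
      refine ⟨0, Submodule.mem_sup_right ?_⟩
      rw [pow_zero, mul_one]
      have := pwa_mem y (fun j => Function.update a i 1 j + 0) i 1 (by simp)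
      rwa [pow_one] at this

lemma len_LL {R : Type u} [CommRing R] {d : ℕ} {C : Ideal R} {y : Fin d → R}
    (h1 : LL C y (fun _ => 1) ≠ ⊤) (n : ℕ) : (n : ℕ∞) ^ d ≤ len (LL C y (fun _ => n)) := by
  have key : ∀ s : Finset (Fin d), (n : ℕ∞) ^ s.card ≤ len (LL C y (fun i => if i ∈ s then n else 1)) := by
    intro s
    induction s using Finset.induction_on with
    | empty => simpa using len_pos h1
    | insert i s hi ih =>
      have e1 : (fun j => if j ∈ insert i s then n else 1) =
          Function.update (fun j => if j ∈ s then n else 1) i n := by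
        ext j
        by_cases hj : j = i
        · subst hj; simp
        · simp [hj]
      have e2 : (fun j => if j ∈ s then n else 1) =
          Function.update (fun j => if j ∈ s then n else 1) i 1 := by
        ext j
        by_cases hj : j = i
        · subst hj; simp [hi]
        · simp [hj]
      rw [e1, Finset.card_insert_of_notMem hi, pow_succ, mul_comm]
      refine le_trans ?_ (len_LL_step i n)
      rw [← e2]
      gcongr
  have := key Finset.univ
  simpa using this

lemma div_aux {R : Type u} [CommRing R] [IsNoetherianRing R] [IsLocalRing R] [IsDomain R] {d : ℕ}
    (hd : ringKrullDim R = d) {c : R} (hc : c ≠ 0) {y : Fin d → R} {k : ℕ}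
    (hy : maximalIdeal R ^ k ≤ Ideal.span (Set.range y)) :
    ∃ s, (∏ i, y i) ^ s ∈ Ideal.span {c} ⊔ pw y (1 + s) := by
  by_contra hcon
  have h1 : LL (Ideal.span {c}) y (fun _ => 1) ≠ ⊤ := by
    rw [Ne, Ideal.eq_top_iff_one]
    rintro ⟨s, hs⟩
    rw [one_mul] at hs
    exact hcon ⟨s, hs⟩
  obtain ⟨C, hC⟩ := len_small hd hc hy
  have h2 := hC (C + 1) (Nat.succ_pos C)
  have h3 : ((C + 1 : ℕ) : ℕ∞) ^ d ≤ len (Ideal.span {c} ⊔ pw y (C + 1)) := by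
    refine (len_LL h1 (C + 1)).trans (len_anti ?_)
    intro r hr
    exact ⟨0, by simpa [pwa, pw] using hr⟩
  have h4 : ((C + 1 : ℕ) : ℕ∞) * ((C + 1 : ℕ) : ℕ∞) ^ d ≤ (C : ℕ∞) * ((C + 1 : ℕ) : ℕ∞) ^ d :=
    le_trans (by gcongr) h2
  have h5 : (C + 1) * (C + 1) ^ d ≤ C * (C + 1) ^ d := by exact_mod_cast h4
  have : 0 < (C + 1) ^ d := by positivity
  nlinarith

lemma div_lemma {R : Type u} [CommRing R] [IsNoetherianRing R] [IsLocalRing R] [IsDomain R] {d : ℕ}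
    (hd : ringKrullDim R = d) {c : R} (hc : c ≠ 0) {x : Fin d → R}
    (hx : (Ideal.span (Set.range x)).radical = maximalIdeal R) (T : ℕ) (hT : 0 < T) :
    ∃ s, (∏ i, x i) ^ s ∈ Ideal.span {c} ⊔ pw x (T + s) := by
  obtain ⟨k, hk⟩ := exists_pow_le hx
  obtain ⟨s, hs⟩ := div_aux hd hc (mpow_le_pw hk T hT)
  refine ⟨T * s, ?_⟩
  have e1 : (∏ i, x i) ^ (T * s) = (∏ i, x i ^ T) ^ s := by rw [pow_mul, Finset.prod_pow]
  have e2 : pw x (T + T * s) = pw (fun i => x i ^ T) (1 + s) := by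
    unfold pw
    congr 2
    ext i
    rw [← pow_mul]; ring
  rw [e1, e2]; exact hs

lemma dual_torsionFree {R : Type u} [CommRing R] [IsNoetherianRing R] [IsLocalRing R] [IsDomain R] {d : ℕ}
    (hd : ringKrullDim R = d) {x : Fin d → R}
    (hx : (Ideal.span (Set.range x)).radical = maximalIdeal R)
    {E : Type u} [AddCommGroup E] [Module R E] {c : R} (hc : c ≠ 0) (l : HH (⊥ : Ideal R) x →ₗ[R] E)
    (hl : c • l = 0) : l = 0 := by
  refine eta_ext fun t b => ?_
  obtain ⟨s, hs⟩ := div_lemma hd hc hx (t + 1) (Nat.succ_pos t)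
  obtain ⟨a, ha, r, hr, har⟩ := Submodule.mem_sup.1 hs
  obtain ⟨w, rfl⟩ := Ideal.mem_span_singleton'.1 ha
  rw [← eta_pi t s b, ← har, add_smul, map_add]
  have h0 : eta (⊥ : Ideal R) x (t + s) (r • b) = 0 := by
    refine eta_of_mem ?_
    rw [AA_ideal, smul_eq_mul]
    refine Submodule.mem_sup_right (Ideal.mul_mem_right _ _ ?_)
    rwa [show t + s + 1 = t + 1 + s by ring]
  rw [h0, add_zero, mul_comm, mul_smul, map_smul, map_smul, ← LinearMap.smul_apply, hl]
  rfl

end RobustAux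

namespace RobustAux
open IsLocalRing

lemma exists_functional {R : Type u} [CommRing R] [IsDomain R] {W : Type u} [AddCommGroup W] [Module R W]
    [Module.Finite R W] (htf : ∀ (c : R) (w : W), c ≠ 0 → c • w = 0 → w = 0) (w : W) (hw : w ≠ 0) :
    ∃ φ : W →ₗ[R] R, φ w ≠ 0 := by
  let K := FractionRing R
  let V := LocalizedModule (nonZeroDivisors R) W
  let f : W →ₗ[R] V := LocalizedModule.mkLinearMap (nonZeroDivisors R) W
  have hfw : f w ≠ 0 := by
    intro h
    obtain ⟨c, hc⟩ := (IsLocalizedModule.eq_zero_iff (nonZeroDivisors R) f).1 h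
    exact hw (htf c w (nonZeroDivisors.ne_zero c.2) hc)
  obtain ⟨ξ, hξ⟩ : ∃ ξ : Module.Dual K V, ξ (f w) ≠ 0 := by
    by_contra hcon
    push Not at hcon
    exact hfw ((Module.forall_dual_apply_eq_zero_iff K (f w)).1 hcon)
  let l : W →ₗ[R] K := (ξ.restrictScalars R) ∘ₗ f
  obtain ⟨r, g, hg⟩ := Module.Finite.exists_fin (R := R) (M := W)
  obtain ⟨b, hb⟩ := IsLocalization.exist_integer_multiples_of_finite (nonZeroDivisors R) (fun i => l (g i))
  have hrange : ∀ v, (b : R) • l v ∈ LinearMap.range (Algebra.linearMap R K) := by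
    intro v
    have hv : v ∈ Submodule.span R (Set.range g) := by rw [hg]; trivial
    induction hv using Submodule.span_induction with
    | mem v hv =>
      obtain ⟨i, rfl⟩ := hv
      obtain ⟨a, ha⟩ := hb i
      exact ⟨a, ha⟩
    | zero => simp
    | add a c _ _ ha hc => rw [map_add, smul_add]; exact add_mem ha hc
    | smul a c _ hc => rw [map_smul, smul_comm]; exact Submodule.smul_mem _ _ hc
  have hinj : Function.Injective (Algebra.linearMap R K) := IsFractionRing.injective R K
  let φ : W →ₗ[R] R := (LinearEquiv.ofInjective _ hinj).symm.toLinearMap ∘ₗ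
    LinearMap.codRestrict _ ((b : R) • l) hrange
  refine ⟨φ, fun h0 => ?_⟩
  have h1 := (LinearEquiv.map_eq_zero_iff (LinearEquiv.ofInjective _ hinj).symm).1 h0
  have h2 : (b : R) • l w = 0 := congrArg Subtype.val h1
  rcases smul_eq_zero.1 h2 with h | h
  · exact nonZeroDivisors.ne_zero b.2 h
  · exact hξ h

lemma pw_smul_top {R S : Type u} [CommRing R] [CommRing S] [Algebra R S] {d : ℕ} (x : Fin d → R) (t : ℕ) {s : S}
    (hs : s ∈ AA (⊥ : Submodule R S) x t) : s ∈ pw (fun i => algebraMap R S (x i)) (t + 1) := by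
  unfold AA at hs
  rw [bot_sup_eq, Ideal.smul_top_eq_map, Submodule.restrictScalars_mem] at hs
  unfold pw at hs ⊢
  rw [Ideal.map_span, ← Set.range_comp] at hs
  convert hs using 4
  simp

/-- The key map: a nonzero `R`-linear functional on `S`. -/
lemma exists_theta {R : Type u} [CommRing R] [IsNoetherianRing R] [IsLocalRing R] [IsDomain R]
    [IsAdicComplete (maximalIdeal R) R] {d : ℕ} (hd : ringKrullDim R = d) (x : Fin d → R)
    (hx : (Ideal.span (Set.range x)).radical = maximalIdeal R)
    (S : Type u) [CommRing S] [Algebra R S]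
    (hQ : IsQSequence (fun i => algebraMap R S (x i))) :
    ∃ θ : S →ₗ[R] R, θ 1 ≠ 0 := by
  obtain ⟨E, _, _, e0, hE, he0, hann, hsoc⟩ := exists_hull R
  obtain ⟨k, hk⟩ := exists_pow_le hx
  have hxm : ∀ i, x i ∈ maximalIdeal R := fun i => by
    rw [← hx]; exact Ideal.le_radical (Ideal.subset_span ⟨i, rfl⟩)
  have hfin : Module.Finite R (HH (⊥ : Ideal R) x →ₗ[R] E) :=
    finite_dual hE (noeth_annP e0 hsoc) d ⊥ x hxm k (hk.trans le_sup_right)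
  set η := eta (⊥ : Submodule R S) x 0 1 with hη
  have hη0 : η ≠ 0 := by
    intro h
    obtain ⟨j, hj⟩ := eta_zero h
    rw [zero_add] at hj
    refine IsQSequence.monomial hQ j ?_
    have := pw_smul_top x j hj
    rw [Algebra.smul_def, mul_one, map_pow, map_prod, ← Finset.prod_pow] at this
    exact this
  obtain ⟨ψ, hψ⟩ := inj_factor hE (LinearMap.toSpanSingleton R _ η) (LinearMap.toSpanSingleton R _ e0) (by
    intro r hr
    rw [LinearMap.toSpanSingleton_apply] at hr ⊢
    refine hann r ?_
    rw [mem_maximalIdeal, mem_nonunits_iff]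
    intro hu
    exact hη0 (hu.smul_eq_zero.1 hr))
  have hψη : ψ η = e0 := by simpa using hψ 1
  have hex : ∀ s : S, ∃ G : HH (⊥ : Ideal R) x →ₗ[R] E, ∀ t r, G (eta _ x t r) =
      ψ (eta (⊥ : Submodule R S) x t (r • s)) := by
    intro s
    obtain ⟨G, hG⟩ := eta_lift (N0 := (⊥ : Ideal R)) (x := x)
      (fun t => ψ ∘ₗ eta (⊥ : Submodule R S) x t ∘ₗ LinearMap.toSpanSingleton R S s) (by
        intro t m hm
        rw [AA_ideal, bot_sup_eq] at hm
        simp only [LinearMap.comp_apply, LinearMap.toSpanSingleton_apply]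
        rw [eta_of_mem, map_zero]
        exact Submodule.mem_sup_right (Submodule.smul_mem_smul hm trivial)) (by
        intro t m
        simp only [LinearMap.comp_apply, LinearMap.toSpanSingleton_apply]
        have := eta_pi (N0 := (⊥ : Submodule R S)) (x := x) t 1 (m • s)
        rw [pow_one] at this
        rw [← this, smul_assoc])
    exact ⟨G, fun t r => by rw [hG]; rfl⟩
  choose G hG using hex
  let θ' : S →ₗ[R] (HH (⊥ : Ideal R) x →ₗ[R] E) :=
    { toFun := G
      map_add' := fun a b => eta_ext fun t r => by
        rw [LinearMap.add_apply, hG, hG, hG, smul_add, map_add, map_add]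
      map_smul' := fun c a => eta_ext fun t r => by
        rw [RingHom.id_apply, LinearMap.smul_apply, hG, hG, smul_comm, map_smul, map_smul] }
  have hθ' : θ' 1 ≠ 0 := by
    intro h
    have h1 := hG 1 0 1
    rw [one_smul, ← hη, hψη] at h1
    have h2 : G 1 = 0 := h
    rw [h2] at h1
    exact he0 h1.symm
  obtain ⟨φ, hφ⟩ := exists_functional (fun c w hc h => dual_torsionFree hd hx hc w h) (θ' 1) hθ'
  exact ⟨φ ∘ₗ θ', hφ⟩

lemma mem_tc_iff {R : Type u} [CommRing R] [IsDomain R] {p : ℕ} {J : Ideal R} {u : R} :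
    MemTightClosure R p J u ↔ ∃ c : R, c ≠ 0 ∧
      ∀ e : ℕ, c * u ^ p ^ e ∈ Ideal.span ((fun a => a ^ p ^ e) '' (J : Set R)) := by
  unfold MemTightClosure
  simp [IsDomain.minimalPrimes_eq_singleton_bot]

/-- Claim B. -/
lemma claimB {R : Type u} [CommRing R] [IsNoetherianRing R] [IsLocalRing R] [IsDomain R]
    [IsAdicComplete (maximalIdeal R) R] (p : ℕ) (hp : p.Prime) [CharP R p]
    {d : ℕ} (hd : ringKrullDim R = d) (x : Fin d → R)
    (hx : (Ideal.span (Set.range x)).radical = maximalIdeal R)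
    (S : Type u) [CommRing S] [Algebra R S]
    (hQ : IsQSequence (fun i => algebraMap R S (x i))) (I : Ideal R) (u : R)
    (hu : algebraMap R S u ∈ I.map (algebraMap R S)) : MemTightClosure R p I u := by
  obtain ⟨θ, hθ⟩ := exists_theta hd x hx S hQ
  have hnt : Nontrivial S := by
    by_contra h
    rw [not_nontrivial_iff_subsingleton] at h
    exact hQ.1 (Subsingleton.elim _ _)
  have hS : CharP S p := by
    rw [CharP.charP_iff_prime_eq_zero hp]
    have := congrArg (algebraMap R S) (CharP.cast_eq_zero R p)
    rwa [map_natCast, map_zero] at this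
  have : ExpChar S p := ExpChar.prime hp
  rw [mem_tc_iff]
  refine ⟨θ 1, hθ, fun e => ?_⟩
  have key : ∀ z ∈ I.map (algebraMap R S), ∀ s : S, θ (s * z ^ p ^ e) ∈
      Ideal.span ((fun a => a ^ p ^ e) '' (I : Set R)) := by
    intro z hz
    unfold Ideal.map at hz
    induction hz using Submodule.span_induction with
    | mem z hz =>
      obtain ⟨a, ha, rfl⟩ := hz
      intro s
      rw [← map_pow, mul_comm, ← Algebra.smul_def, map_smul, smul_eq_mul]
      exact Ideal.mul_mem_right _ _ (Ideal.subset_span ⟨a, ha, rfl⟩)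
    | zero =>
      intro s
      rw [zero_pow (pow_pos hp.pos e).ne', mul_zero, map_zero]
      exact zero_mem _
    | add a b _ _ ha hb =>
      intro s
      rw [add_pow_expChar_pow, mul_add, map_add]
      exact add_mem (ha s) (hb s)
    | smul a b _ hb =>
      intro s
      rw [smul_eq_mul, mul_pow, ← mul_assoc]
      exact hb _
  have := key _ hu 1
  rw [one_mul, ← map_pow, Algebra.algebraMap_eq_smul_one, map_smul, smul_eq_mul, mul_comm] at this
  exact this

end RobustAux

namespace RobustAux
open IsLocalRing
open scoped TensorProduct

/-- The tight closure as an ideal. -/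
def TC {R : Type u} [CommRing R] [IsDomain R] (p : ℕ) (hp : p.Prime) [CharP R p] (J : Ideal R) : Ideal R where
  carrier := {u | MemTightClosure R p J u}
  zero_mem' := mem_tc_iff.2 ⟨1, one_ne_zero, fun e => by
    rw [zero_pow (pow_pos hp.pos e).ne', mul_zero]; exact zero_mem _⟩
  add_mem' := by
    intro a b ha hb
    have : ExpChar R p := ExpChar.prime hp
    obtain ⟨c, hc, h⟩ := mem_tc_iff.1 ha
    obtain ⟨c', hc', h'⟩ := mem_tc_iff.1 hb
    refine mem_tc_iff.2 ⟨c * c', mul_ne_zero hc hc', fun e => ?_⟩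
    have e1 : c * c' * (a + b) ^ p ^ e = c' * (c * a ^ p ^ e) + c * (c' * b ^ p ^ e) := by
      rw [add_pow_expChar_pow]; ring
    rw [e1]
    exact add_mem (Ideal.mul_mem_left _ _ (h e)) (Ideal.mul_mem_left _ _ (h' e))
  smul_mem' := by
    intro r a ha
    obtain ⟨c, hc, h⟩ := mem_tc_iff.1 ha
    refine mem_tc_iff.2 ⟨c, hc, fun e => ?_⟩
    rw [smul_eq_mul, mul_pow, mul_left_comm]
    exact Ideal.mul_mem_left _ _ (h e)

lemma mem_TC {R : Type u} [CommRing R] [IsDomain R] {p : ℕ} {hp : p.Prime} [CharP R p] {J : Ideal R} {u : R} :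
    u ∈ TC p hp J ↔ MemTightClosure R p J u := Iff.rfl

lemma le_TC {R : Type u} [CommRing R] [IsDomain R] (p : ℕ) (hp : p.Prime) [CharP R p] (J : Ideal R) :
    J ≤ TC p hp J := fun u hu => mem_tc_iff.2 ⟨1, one_ne_zero, fun e => by
      rw [one_mul]; exact Ideal.subset_span ⟨u, hu, rfl⟩⟩

lemma TC_uniform {R : Type u} [CommRing R] [IsDomain R] [IsNoetherianRing R] (p : ℕ) (hp : p.Prime) [CharP R p]
    (J : Ideal R) : ∃ c : R, c ≠ 0 ∧ ∀ v ∈ TC p hp J, ∀ e : ℕ,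
      c * v ^ p ^ e ∈ Ideal.span ((fun a => a ^ p ^ e) '' (J : Set R)) := by
  have : ExpChar R p := ExpChar.prime hp
  obtain ⟨k, v, hv⟩ := Submodule.fg_iff_exists_fin_generating_family.1 (IsNoetherian.noetherian (TC p hp J))
  have hvm : ∀ i, MemTightClosure R p J (v i) := fun i => (mem_TC (hp := hp)).1 (by
    rw [← hv]; exact Submodule.subset_span ⟨i, rfl⟩)
  choose c hc h using fun i => mem_tc_iff.1 (hvm i)
  refine ⟨∏ i, c i, Finset.prod_ne_zero_iff.2 fun i _ => hc i, fun w hw e => ?_⟩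
  rw [← hv] at hw
  induction hw using Submodule.span_induction with
  | mem w hw =>
    obtain ⟨i, rfl⟩ := hw
    rw [← Finset.mul_prod_erase Finset.univ c (Finset.mem_univ i), mul_right_comm]
    exact Ideal.mul_mem_right _ _ (h i e)
  | zero => rw [zero_pow (pow_pos hp.pos e).ne', mul_zero]; exact zero_mem _
  | add a b _ _ ha hb => rw [add_pow_expChar_pow, mul_add]; exact add_mem ha hb
  | smul a b _ hb =>
    rw [smul_eq_mul, mul_pow, mul_left_comm]
    exact Ideal.mul_mem_left _ _ hb

lemma TC_TC {R : Type u} [CommRing R] [IsDomain R] [IsNoetherianRing R] (p : ℕ) (hp : p.Prime) [CharP R p]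
    (J : Ideal R) : TC p hp (TC p hp J) = TC p hp J := by
  refine le_antisymm ?_ (le_TC p hp _)
  intro u hu
  obtain ⟨c, hc, h⟩ := TC_uniform p hp J
  obtain ⟨c', hc', h'⟩ := mem_tc_iff.1 (mem_TC.1 hu)
  refine mem_tc_iff.2 ⟨c * c', mul_ne_zero hc hc', fun e => ?_⟩
  have : Ideal.span ((fun a => a ^ p ^ e) '' (TC p hp J : Set R)) ≤
      col (Ideal.span ((fun a => a ^ p ^ e) '' (J : Set R))) c := by
    refine Ideal.span_le.2 ?_
    rintro _ ⟨v, hv, rfl⟩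
    exact h v hv e
  rw [mul_assoc]
  exact this (h' e)

lemma forcing_iff {R : Type u} [CommRing R] (I : Ideal R) (u : R) (S : Type u) [CommRing S] [Algebra R S] :
    IsForcingAlgebra R R I u S ↔ algebraMap R S u ∈ I.map (algebraMap R S) := by
  unfold IsForcingAlgebra
  have hmap : ∀ z : S ⊗[R] R, z ∈ Submodule.baseChange S I ↔
      TensorProduct.AlgebraTensorModule.rid R S S z ∈ I.map (algebraMap R S) := by
    intro z
    have h1 : Submodule.map (TensorProduct.AlgebraTensorModule.rid R S S).toLinearMap
        (Submodule.baseChange S I) = I.map (algebraMap R S) := by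
      rw [Submodule.baseChange_eq_span, Submodule.map_span]
      unfold Ideal.map Ideal.span
      congr 1
      ext s
      simp [Algebra.smul_def]
    rw [← h1]
    constructor
    · intro hz; exact ⟨z, hz, rfl⟩
    · rintro ⟨w, hw, hwz⟩
      rwa [← (TensorProduct.AlgebraTensorModule.rid R S S).injective hwz]
  rw [hmap]
  simp [Algebra.smul_def]

lemma genForcing_mem {R : Type u} [CommRing R] {n : ℕ} (g : Fin n → R) (u : R) :
    algebraMap R (GenForcing g u) u ∈ (Ideal.span (Set.range g)).map (algebraMap R (GenForcing g u)) := by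
  have h : algebraMap R (GenForcing g u) u =
      ∑ l, Ideal.Quotient.mk _ (MvPolynomial.X l) * algebraMap R (GenForcing g u) (g l) := by
    have : Ideal.Quotient.mk (Ideal.span {MvPolynomial.C u -
            ∑ l : Fin n, MvPolynomial.X l * MvPolynomial.C (g l)}) (MvPolynomial.C u -
            ∑ l : Fin n, MvPolynomial.X l * MvPolynomial.C (g l)) = 0 :=
      Ideal.Quotient.eq_zero_iff_mem.2 (Ideal.mem_span_singleton_self _)
    rw [map_sub, sub_eq_zero, map_sum] at this
    simp only [map_mul] at this
    exact this
  rw [h]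
  exact Ideal.sum_mem _ fun l _ => Ideal.mul_mem_left _ _ (Ideal.mem_map_of_mem _ (Ideal.subset_span ⟨l, rfl⟩))

lemma immediate_eq {R : Type u} [CommRing R] [IsNoetherianRing R] [IsLocalRing R] [IsDomain R]
    [IsAdicComplete (maximalIdeal R) R] (p : ℕ) (hp : p.Prime) [CharP R p] (I : Ideal R) :
    immediateRobustClosure R R I = TC p hp I := by
  refine le_antisymm (sup_le (le_TC p hp I) (Submodule.span_le.2 ?_)) ?_
  · rintro u ⟨S, _, _, hf, hr⟩
    obtain ⟨r, z, hz, hz'⟩ := exists_params R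
    have hQ := hr r z hz (by rw [hz']; exact maximalIdeal.isMaximal R)
    exact claimB p hp hz z hz' S hQ I u ((forcing_iff I u S).1 hf)
  · intro u hu
    obtain ⟨n, g, hg⟩ := Submodule.fg_iff_exists_fin_generating_family.1 (IsNoetherian.noetherian I)
    have hg' : Ideal.span (Set.range g) = I := hg
    refine Submodule.mem_sup_right (Submodule.subset_span ⟨GenForcing g u, inferInstance, inferInstance, ?_, ?_⟩)
    · rw [forcing_iff, ← hg']
      exact genForcing_mem g u
    · intro d x hd hx
      refine claimA p hp hd g u ?_ x (eq_maximalIdeal hx)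
      rw [hg']; exact hu

lemma robust_eq {R : Type u} [CommRing R] [IsNoetherianRing R] [IsLocalRing R] [IsDomain R]
    [IsAdicComplete (maximalIdeal R) R] (p : ℕ) (hp : p.Prime) [CharP R p] (I : Ideal R) :
    robustClosureCLD R R I = TC p hp I := by
  have h1 : ∀ j : ℕ, (immediateRobustClosure R R)^[j + 1] I = TC p hp I := by
    intro j
    induction j with
    | zero => exact immediate_eq p hp I
    | succ j ih => rw [Function.iterate_succ_apply', ih, immediate_eq p hp, TC_TC]
  unfold robustClosureCLD
  refine le_antisymm (iSup_le fun j => ?_) ?_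
  · cases j with
    | zero => exact le_TC p hp I
    | succ j => exact (h1 j).le
  · exact (h1 0).ge.trans (le_iSup (fun j => (immediateRobustClosure R R)^[j] I) 1)

end RobustAux

open RobustAux
/-- Over a Noetherian complete local domain `(R,m)` of prime
characteristic `p` with `I = (g₁,…,g_n)`: (i) the robust closure of `I` (and indeed
already the immediate robust closure `I^▫`) equals the tight closure `I^*`;
(ii) if the image in the generic forcing algebra `S = R[Z]/(u − Σ Z_l g_l)` of one
system of parameters of `R` is a Q-sequence, then so is the image of every system
of parameters. -/
theorem robustClosure_eq_tightClosure
    (R : Type u) [CommRing R] [IsNoetherianRing R] [IsLocalRing R] [IsDomain R]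
    [IsAdicComplete (IsLocalRing.maximalIdeal R) R]
    (p : ℕ) (hp : p.Prime) [CharP R p]
    (d : ℕ) (hd : ringKrullDim R = d)
    (n : ℕ) (g : Fin n → R) :
    (∀ u : R,
      (u ∈ robustClosureCLD R R (Ideal.span (Set.range g) : Ideal R) ↔
        MemTightClosure R p (Ideal.span (Set.range g)) u) ∧
      (u ∈ immediateRobustClosure R R (Ideal.span (Set.range g) : Ideal R) ↔
        MemTightClosure R p (Ideal.span (Set.range g)) u)) ∧
    (∀ u : R,
      (∃ x : Fin d → R,
        (Ideal.span (Set.range x)).radical = IsLocalRing.maximalIdeal R ∧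
        IsQSequence (fun i => algebraMap R (MvPolynomial (Fin n) R ⧸
          Ideal.span {MvPolynomial.C u -
            ∑ l : Fin n, MvPolynomial.X l * MvPolynomial.C (g l)}) (x i))) →
      (∀ x : Fin d → R,
        (Ideal.span (Set.range x)).radical = IsLocalRing.maximalIdeal R →
        IsQSequence (fun i => algebraMap R (MvPolynomial (Fin n) R ⧸
          Ideal.span {MvPolynomial.C u -
            ∑ l : Fin n, MvPolynomial.X l * MvPolynomial.C (g l)}) (x i)))) := by
  refine ⟨fun u => ⟨?_, ?_⟩, ?_⟩
  · rw [robust_eq p hp]; exact Iff.rfl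
  · rw [immediate_eq p hp]; exact Iff.rfl
  · rintro u ⟨x, hx, hQ⟩ y hy
    exact claimA p hp hd g u (claimB p hp hd x hx (GenForcing g u) hQ _ u (genForcing_mem g u)) y hy
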